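/- arXiv:0805.1657 — 2 statements merged into one kernel-verified Lean document; each statement's English description precedes it below -/
import Mathlib

section
/- Let $K$ be a field and $n \geq 3$. The projective dimension of $R/I(C_n)$ over $R = K[x_1,\dots,x_n]$, where $I(C_n)$ is the edge ideal of the $n$-cycle, equals $\frac{2n}{3}$ if $n \equiv 0 \pmod 3$, $\frac{2n+1}{3}$ if $n \equiv 1 \pmod 3$, and $\frac{2n-1}{3}$ if $n \equiv 2 \pmod 3$. In particular, it is independent of the characteristic of $K$. -/
open MvPolynomial

/-- Arithmetical rank: the least number of elements of `R` generating `I` up to radical. -/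
noncomputable def araRank {R : Type} [CommRing R] (I : Ideal R) : ℕ :=
  sInf {s : ℕ | ∃ f : Fin s → R, (Ideal.span (Set.range f)).radical = I.radical}

/-- The edge ideal `I(Cₙ) = (x₁x₂, x₂x₃, …, x_{n-1}xₙ, x₁xₙ)` of the `n`-cycle,
with the vertices `x₁,…,xₙ` of the cycle indexed by `ZMod n` (`xⱼ = X (j : ZMod n)`). -/
noncomputable def cycleIdeal (K : Type) [Field K] (n : ℕ) :
    Ideal (MvPolynomial (ZMod n) K) :=
  Ideal.span (Set.range fun i : ZMod n => X i * X (i + 1))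

/-- `xⱼ`, the `j`-th variable of the polynomial ring (indices taken mod `n`). -/
noncomputable def xv (K : Type) [Field K] (n : ℕ) (j : ℕ) : MvPolynomial (ZMod n) K :=
  X (j : ZMod n)

/-- Projective dimension of an `R`-module `M`, characterized via vanishing of the
`Ext` functors: the least `d` such that `Ext^i(M, N) = 0` for all `i > d` and all `N`. -/
noncomputable def projDim (R : Type) [CommRing R] (M : Type) [AddCommGroup M]
    [Module R M] : ℕ∞ :=
  sInf {d : ℕ∞ | ∀ i : ℕ, d < i → ∀ N : ModuleCat R,
    Subsingleton (((Ext R (ModuleCat R) i).obj (Opposite.op (ModuleCat.of R M))).obj N)}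

namespace EdgeIdeal

open CategoryTheory

section Homological

variable {R : Type} [CommRing R]

/-- The classical and the derived-category versions of `Ext` vanish simultaneously. -/
theorem subsingleton_Ext_iff (M N : ModuleCat.{0} R) (i : ℕ) :
    Subsingleton (((_root_.Ext R (ModuleCat R) (i + 1)).obj (Opposite.op M)).obj N) ↔
      Subsingleton (Abelian.Ext M N (i + 1)) := by
  let P := projectiveResolution M
  rw [(P.isoExt (R := R) (i + 1) N).toLinearEquiv.toEquiv.subsingleton_congr,
    ← ModuleCat.isZero_iff_subsingleton, ← HomologicalComplex.exactAt_iff_isZero_homology,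
    HomologicalComplex.exactAt_iff' _ i (i + 1) (i + 2) (by simp) (by simp),
    ShortComplex.moduleCat_exact_iff]
  constructor
  · intro h
    refine subsingleton_of_forall_eq 0 fun x ↦ ?_
    obtain ⟨f, hf, rfl⟩ := P.extMk_surjective x (i + 2) rfl
    rw [P.extMk_eq_zero_iff f (i + 2) rfl hf i rfl]
    exact h f hf
  · intro h f hf
    exact (P.extMk_eq_zero_iff f (i + 2) rfl hf i rfl).1 (Subsingleton.elim _ _)

theorem projDim_eq {M : Type} [AddCommGroup M] [Module R M] (d : ℕ)
    (hle : HasProjectiveDimensionLE (ModuleCat.of R M) (d + 1))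
    (N : ModuleCat.{0} R) (hN : Nontrivial (Abelian.Ext (ModuleCat.of R M) N (d + 1))) :
    projDim R M = (d + 1 : ℕ) := by
  refine le_antisymm (sInf_le fun i hi N ↦ ?_) (le_sInf fun e he ↦ ?_)
  · obtain ⟨i, rfl⟩ : ∃ j, i = j + 1 := ⟨i - 1, by norm_cast at hi; omega⟩
    rw [subsingleton_Ext_iff]
    exact HasProjectiveDimensionLT.subsingleton _ (d + 1 + 1) _ (by norm_cast at hi) N
  · by_contra! h
    have := (subsingleton_Ext_iff _ N d).1 (he (d + 1) h N)
    exact not_subsingleton _ this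

variable (S : Type) [CommRing S] [Algebra S R]

/-- `Extᵈ(M, N)` is spanned by one element over `S`. -/
def ExtCyclic (M N : ModuleCat.{0} R) (d : ℕ) : Prop :=
  ∃ e : Abelian.Ext M N d, ∀ x : Abelian.Ext M N d, ∃ c : S, x = algebraMap S R c • e

variable {S} {T : ShortComplex (ModuleCat.{0} R)} (hT : T.ShortExact) {N : ModuleCat.{0} R} {d : ℕ}

include hT

theorem ExtCyclic.of_shortExact_left (h : ExtCyclic S T.X₁ N d)
    [HasProjectiveDimensionLT T.X₂ (d + 1)] : ExtCyclic S T.X₃ N (d + 1) := by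
  obtain ⟨e, he⟩ := h
  refine ⟨hT.extClass.comp e (by omega), fun x ↦ ?_⟩
  obtain ⟨y, rfl⟩ := Abelian.Ext.contravariant_sequence_exact₃ hT N x
    (Abelian.Ext.eq_zero_of_hasProjectiveDimensionLT _ (d + 1) le_rfl) (add_comm 1 d)
  obtain ⟨c, rfl⟩ := he y
  exact ⟨c, by simp⟩

theorem ExtCyclic.of_shortExact_right (h : ExtCyclic S T.X₃ N d)
    [HasProjectiveDimensionLT T.X₁ d] : ExtCyclic S T.X₂ N d := by
  obtain ⟨e, he⟩ := h
  refine ⟨(Abelian.Ext.mk₀ T.g).comp e (zero_add d), fun x ↦ ?_⟩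
  obtain ⟨y, rfl⟩ := Abelian.Ext.contravariant_sequence_exact₂ hT N x
    (Abelian.Ext.eq_zero_of_hasProjectiveDimensionLT _ d le_rfl)
  obtain ⟨c, rfl⟩ := he y
  exact ⟨c, by simp⟩

theorem nontrivial_ext_middle (h : Nontrivial (Abelian.Ext T.X₁ N d))
    [HasProjectiveDimensionLT T.X₃ (d + 1)] : Nontrivial (Abelian.Ext T.X₂ N d) := by
  obtain ⟨x, hx⟩ := exists_ne (0 : Abelian.Ext T.X₁ N d)
  obtain ⟨y, rfl⟩ := Abelian.Ext.contravariant_sequence_exact₁ hT N x (add_comm 1 d)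
    (Abelian.Ext.eq_zero_of_hasProjectiveDimensionLT _ (d + 1) le_rfl)
  exact nontrivial_of_ne y 0 (by rintro rfl; simp at hx)

/-- If restriction along `T.f` vanishes on `Extᵈ`, then the connecting map is injective. -/
theorem nontrivial_ext_of_precomp_eq_zero (h : Nontrivial (Abelian.Ext T.X₁ N d))
    (h0 : ∀ x : Abelian.Ext T.X₂ N d, (Abelian.Ext.mk₀ T.f).comp x (zero_add d) = 0) :
    Nontrivial (Abelian.Ext T.X₃ N (d + 1)) := by
  obtain ⟨x, hx⟩ := exists_ne (0 : Abelian.Ext T.X₁ N d)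
  refine nontrivial_of_ne (hT.extClass.comp x (add_comm 1 d)) 0 fun h ↦ hx ?_
  obtain ⟨y, rfl⟩ := Abelian.Ext.contravariant_sequence_exact₁ hT N x (add_comm 1 d) h
  exact h0 y

theorem precomp_eq_zero_of_extCyclic {k : Type} [Field k] [Algebra k R]
    (h : ExtCyclic k T.X₁ N d) (h₃ : Nontrivial (Abelian.Ext T.X₃ N (d + 1)))
    [HasProjectiveDimensionLT T.X₂ (d + 1)] (x : Abelian.Ext T.X₂ N d) :
    (Abelian.Ext.mk₀ T.f).comp x (zero_add d) = 0 := by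
  obtain ⟨e, he⟩ := h
  obtain ⟨c, hc⟩ := he ((Abelian.Ext.mk₀ T.f).comp x (zero_add d))
  have h0 : hT.extClass.comp ((Abelian.Ext.mk₀ T.f).comp x (zero_add d)) (add_comm 1 d) = 0 := by
    simp
  rw [hc, Abelian.Ext.comp_smul] at h0
  rw [hc]
  by_cases hc0 : c = 0
  · simp [hc0]
  have hδ : hT.extClass.comp e (add_comm 1 d) = 0 := by
    have := congrArg (algebraMap k R c⁻¹ • ·) h0
    simpa [smul_smul, ← map_mul, hc0] using this
  obtain ⟨y, hy⟩ := exists_ne (0 : Abelian.Ext T.X₃ N (d + 1))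
  obtain ⟨z, rfl⟩ := Abelian.Ext.contravariant_sequence_exact₃ hT N y
    (Abelian.Ext.eq_zero_of_hasProjectiveDimensionLT _ (d + 1) le_rfl) (add_comm 1 d)
  obtain ⟨b, rfl⟩ := he z
  simp [hδ] at hy

omit hT in
theorem precomp_eq_zero_of_eq_comp {L M P N : ModuleCat.{0} R} {f : L ⟶ P} {g : L ⟶ M} {h : M ⟶ P}
    (hf : f = g ≫ h) {x : Abelian.Ext P N d}
    (h0 : (Abelian.Ext.mk₀ h).comp x (zero_add d) = 0) :
    (Abelian.Ext.mk₀ f).comp x (zero_add d) = 0 := by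
  rw [hf, ← Abelian.Ext.mk₀_comp_mk₀_assoc, h0, Abelian.Ext.comp_zero]

end Homological

section Quotients

variable {R : Type} [CommRing R]

/-- Multiplication by `y` as a morphism `R ⧸ I ⟶ R ⧸ J`. -/
noncomputable def mulQuot (I J : Ideal R) (y : R) (h : ∀ r ∈ I, y * r ∈ J) :
    ModuleCat.of R (R ⧸ I) ⟶ ModuleCat.of R (R ⧸ J) :=
  ModuleCat.ofHom (Submodule.mapQ I J (LinearMap.mulLeft R y) h)

theorem mulQuot_comp {I J L : Ideal R} {y z : R} (h : ∀ r ∈ I, y * r ∈ J)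
    (h' : ∀ r ∈ J, z * r ∈ L) (h'' : ∀ r ∈ I, z * y * r ∈ L) :
    mulQuot I J y h ≫ mulQuot J L z h' = mulQuot I L (z * y) h'' := by
  refine ModuleCat.hom_ext (LinearMap.ext fun x ↦ ?_)
  obtain ⟨r, rfl⟩ := Ideal.Quotient.mk_surjective x
  exact congrArg (Ideal.Quotient.mk L) (mul_assoc z y r).symm

theorem mulQuot_self (I : Ideal R) (y : R) (h : ∀ r ∈ I, y * r ∈ I) :
    mulQuot I I y h = y • 𝟙 _ := by
  refine ModuleCat.hom_ext (LinearMap.ext fun x ↦ ?_)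
  obtain ⟨r, rfl⟩ := Ideal.Quotient.mk_surjective x
  rfl

/-- The complex `R ⧸ (I : y) ⟶ R ⧸ I ⟶ R ⧸ (I + (y))`. -/
noncomputable def colonComplex {I J L : Ideal R} (y : R) (hJ : ∀ r, r ∈ J ↔ y * r ∈ I)
    (hL : ∀ r, r ∈ L ↔ ∃ a, r - y * a ∈ I) : ShortComplex (ModuleCat.{0} R) :=
  ShortComplex.mk (mulQuot J I y fun r ↦ (hJ r).1)
    (mulQuot I L 1 fun r hr ↦ (hL _).2 ⟨0, by simpa using hr⟩) (by
      refine ModuleCat.hom_ext (LinearMap.ext fun x ↦ ?_)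
      obtain ⟨r, rfl⟩ := Ideal.Quotient.mk_surjective x
      refine Ideal.Quotient.eq_zero_iff_mem.2 ((hL _).2 ⟨r, ?_⟩)
      simp)

theorem colonComplex_shortExact {I J L : Ideal R} (y : R) (hJ : ∀ r, r ∈ J ↔ y * r ∈ I)
    (hL : ∀ r, r ∈ L ↔ ∃ a, r - y * a ∈ I) : (colonComplex y hJ hL).ShortExact := by
  refine ModuleCat.shortComplex_shortExact _ ?_ ?_ ?_
  · intro x
    obtain ⟨r, rfl⟩ := Ideal.Quotient.mk_surjective x
    constructor
    · intro h
      obtain ⟨a, ha⟩ := (hL _).1 (Ideal.Quotient.eq_zero_iff_mem.1 h)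
      refine ⟨Ideal.Quotient.mk J a, ?_⟩
      refine (Ideal.Quotient.eq (x := y * a) (y := r)).2 ?_
      rw [← neg_mem_iff]
      simpa using ha
    · rintro ⟨z, hz⟩
      rw [← hz]
      exact (colonComplex y hJ hL).moduleCat_zero_apply z
  · refine (injective_iff_map_eq_zero (colonComplex y hJ hL).f.hom).2 fun x hx ↦ ?_
    obtain ⟨r, rfl⟩ := Ideal.Quotient.mk_surjective x
    exact Ideal.Quotient.eq_zero_iff_mem.2 ((hJ r).2 (Ideal.Quotient.eq_zero_iff_mem.1 hx))
  · intro x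
    obtain ⟨r, rfl⟩ := Ideal.Quotient.mk_surjective x
    exact ⟨Ideal.Quotient.mk I r, congrArg (Ideal.Quotient.mk L) (one_mul r)⟩

theorem smul_id_comp_ext_eq_zero {M N : ModuleCat.{0} R} {d : ℕ} {y : R}
    (hy : ∀ z : N, y • z = 0) (x : Abelian.Ext M N d) :
    (Abelian.Ext.mk₀ (y • 𝟙 M)).comp x (zero_add d) = 0 := by
  have h : y • 𝟙 N = 0 := by
    ext z
    exact hy z
  rw [Abelian.Ext.mk₀_smul, Abelian.Ext.smul_comp, Abelian.Ext.mk₀_id_comp,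
    Abelian.Ext.smul_eq_comp_mk₀, h, Abelian.Ext.mk₀_zero, Abelian.Ext.comp_zero]

end Quotients

section FaceIdeal

variable (K : Type) [Field K] {σ : Type} [DecidableEq σ]

/-- The squarefree monomial ideal spanned by the monomials whose support lies in `U`. -/
noncomputable def faceIdeal (U : UpperSet (Finset σ)) : Ideal (MvPolynomial σ K) :=
  Ideal.span ((fun u ↦ monomial u (1 : K)) '' {u | u.support ∈ U})

/-- The squarefree monomial with support `T`. -/
noncomputable def sqfreeMonomial (T : Finset σ) : MvPolynomial σ K :=
  monomial (Finsupp.indicator T fun _ _ ↦ 1) 1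

variable {K}

omit [DecidableEq σ] in
theorem mem_faceIdeal {U : UpperSet (Finset σ)} {f : MvPolynomial σ K} :
    f ∈ faceIdeal K U ↔ ∀ u, f.coeff u ≠ 0 → u.support ∈ U := by
  simp only [faceIdeal, mem_ideal_span_monomial_image, mem_support_iff]
  refine forall₂_congr fun u _ ↦ ⟨?_, fun h ↦ ⟨u, h, le_rfl⟩⟩
  rintro ⟨s, hs, hsu⟩
  exact U.upper (Finsupp.support_mono hsu) hs

omit [DecidableEq σ] in
theorem monomial_mem_faceIdeal {U : UpperSet (Finset σ)} {u : σ →₀ ℕ} (hu : u.support ∈ U) :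
    monomial u (1 : K) ∈ faceIdeal K U :=
  Ideal.subset_span ⟨u, hu, rfl⟩

theorem support_indicator_one (T : Finset σ) :
    (Finsupp.indicator T fun _ _ ↦ (1 : ℕ)).support = T := by
  ext i
  simp [Finsupp.indicator_apply]

theorem indicator_one_le {T : Finset σ} {u : σ →₀ ℕ} (h : T ⊆ u.support) :
    (Finsupp.indicator T fun _ _ ↦ (1 : ℕ)) ≤ u := by
  intro i
  by_cases hi : i ∈ T
  · simpa [Finsupp.indicator_apply, hi, Nat.one_le_iff_ne_zero] using h hi
  · simp [Finsupp.indicator_apply, hi]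

theorem mem_faceIdeal_colon {U V : UpperSet (Finset σ)} {T : Finset σ}
    (hV : ∀ F, F ∈ V ↔ F ∪ T ∈ U) (f : MvPolynomial σ K) :
    f ∈ faceIdeal K V ↔ sqfreeMonomial K T * f ∈ faceIdeal K U := by
  have hsupp (u : σ →₀ ℕ) :
      ((Finsupp.indicator T fun _ _ ↦ (1 : ℕ)) + u).support = u.support ∪ T := by
    ext i
    simp [Finsupp.indicator_apply]
    tauto
  simp only [mem_faceIdeal, sqfreeMonomial]
  constructor
  · intro h u hu
    rw [coeff_monomial_mul'] at hu
    split_ifs at hu with hle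
    · obtain ⟨v, rfl⟩ := exists_add_of_le hle
      rw [hsupp, ← hV]
      exact h v (by simpa using hu)
    · simp at hu
  · intro h u hu
    rw [hV, ← hsupp]
    exact h _ (by simpa [coeff_monomial_mul] using hu)

theorem mem_faceIdeal_add {U W : UpperSet (Finset σ)} {T : Finset σ}
    (hW : ∀ F, F ∈ W ↔ F ∈ U ∨ T ⊆ F) (f : MvPolynomial σ K) :
    f ∈ faceIdeal K W ↔ ∃ a, f - sqfreeMonomial K T * a ∈ faceIdeal K U := by
  constructor
  · intro hf
    refine Submodule.span_induction (p := fun f _ ↦ ∃ a, f - sqfreeMonomial K T * a ∈ faceIdeal K U)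
      ?_ ⟨0, by simp⟩ ?_ ?_ hf
    · rintro _ ⟨u, hu, rfl⟩
      rcases (hW _).1 hu with hu | hu
      · exact ⟨0, by simpa using monomial_mem_faceIdeal hu⟩
      · obtain ⟨v, rfl⟩ := exists_add_of_le (indicator_one_le hu)
        exact ⟨monomial v 1, by simp [sqfreeMonomial, monomial_mul]⟩
    · rintro x y _ _ ⟨a, ha⟩ ⟨b, hb⟩
      refine ⟨a + b, ?_⟩
      convert add_mem ha hb using 1
      ring
    · rintro r x _ ⟨a, ha⟩
      refine ⟨r * a, ?_⟩
      convert Ideal.mul_mem_left _ r ha using 1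
      simp only [smul_eq_mul]
      ring
  · rintro ⟨a, ha⟩
    have h1 : faceIdeal K U ≤ faceIdeal K W := fun g hg ↦
      mem_faceIdeal.2 fun u hu ↦ (hW _).2 (.inl (mem_faceIdeal.1 hg u hu))
    have h2 : sqfreeMonomial K T ∈ faceIdeal K W :=
      monomial_mem_faceIdeal ((hW _).2 (.inr (support_indicator_one T).ge))
    simpa using add_mem (h1 ha) (Ideal.mul_mem_right a _ h2)

variable (K)

/-- The Stanley–Reisner module of `U`. -/
noncomputable abbrev faceModule (U : UpperSet (Finset σ)) : ModuleCat.{0} (MvPolynomial σ K) :=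
  ModuleCat.of _ (MvPolynomial σ K ⧸ faceIdeal K U)

variable (σ) in
/-- The field `K`, on which all variables act by zero. -/
noncomputable def residueModule : ModuleCat.{0} (MvPolynomial σ K) :=
  (ModuleCat.restrictScalars (constantCoeff (σ := σ) (R := K))).obj (ModuleCat.of K K)

theorem sqfreeMonomial_smul {T : Finset σ} (hT : T.Nonempty) (z : residueModule K σ) :
    sqfreeMonomial K T • z = 0 := by
  refine (ModuleCat.restrictScalars.smul_def _ _ _).trans ?_
  obtain ⟨i, hi⟩ := hT
  have : constantCoeff (sqfreeMonomial K T) = 0 := by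
    rw [sqfreeMonomial, constantCoeff_monomial, if_neg]
    intro h
    simpa [Finsupp.indicator_apply, hi] using DFunLike.congr_fun h i
  rw [this, zero_smul]
  rfl

/-- `faceModule K U` has projective dimension at most `d`. -/
abbrev FacePD (U : UpperSet (Finset σ)) (d : ℕ) : Prop :=
  HasProjectiveDimensionLT (faceModule K U) (d + 1)

/-- `Extᵈ(faceModule K U, K) ≠ 0`. -/
abbrev FaceNZ (U : UpperSet (Finset σ)) (d : ℕ) : Prop :=
  Nontrivial (Abelian.Ext (faceModule K U) (residueModule K σ) d)

/-- `Extᵈ(faceModule K U, K)` is at most one-dimensional over `K`. -/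
abbrev FaceCyclic (U : UpperSet (Finset σ)) (d : ℕ) : Prop :=
  ExtCyclic K (faceModule K U) (residueModule K σ) d

variable {K} {U V W : UpperSet (Finset σ)} {T : Finset σ} {d : ℕ}

omit [DecidableEq σ] in
theorem facePD_mono {e : ℕ} (h : FacePD K U d) (hde : d ≤ e) : FacePD K U e :=
  hasProjectiveDimensionLT_of_ge _ (d + 1) (e + 1) (by omega)

section Colon

variable (hV : ∀ F, F ∈ V ↔ F ∪ T ∈ U) (hW : ∀ F, F ∈ W ↔ F ∈ U ∨ T ⊆ F)

include hV hW

theorem face_shortExact :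
    (colonComplex (sqfreeMonomial K T) (mem_faceIdeal_colon hV)
      (mem_faceIdeal_add hW)).ShortExact :=
  colonComplex_shortExact _ _ _

theorem facePD_of_colon (h₁ : FacePD K V d) (h₃ : FacePD K W d) : FacePD K U d :=
  (face_shortExact hV hW).hasProjectiveDimensionLT_X₂ (d + 1) h₁ h₃

theorem facePD_add (h₁ : FacePD K V d) (h₂ : FacePD K U (d + 1)) : FacePD K W (d + 1) :=
  (face_shortExact hV hW).hasProjectiveDimensionLT_X₃ (d + 1) h₁ h₂

theorem faceNZ_of_colon (h₁ : FaceNZ K V d) (h₃ : FacePD K W d) : FaceNZ K U d :=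
  have : HasProjectiveDimensionLT (colonComplex (sqfreeMonomial K T) (mem_faceIdeal_colon hV)
      (mem_faceIdeal_add hW)).X₃ (d + 1) := h₃
  nontrivial_ext_middle (face_shortExact hV hW) h₁

theorem faceCyclic_of_add (h₁ : FacePD K V d) (h₃ : FaceCyclic K W (d + 1)) :
    FaceCyclic K U (d + 1) :=
  have : HasProjectiveDimensionLT (colonComplex (sqfreeMonomial K T) (mem_faceIdeal_colon hV)
      (mem_faceIdeal_add hW)).X₁ (d + 1) := h₁
  ExtCyclic.of_shortExact_right (face_shortExact hV hW) h₃

theorem faceCyclic_add (h₁ : FaceCyclic K V d) (h₂ : FacePD K U d) :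
    FaceCyclic K W (d + 1) :=
  have : HasProjectiveDimensionLT (colonComplex (sqfreeMonomial K T) (mem_faceIdeal_colon hV)
      (mem_faceIdeal_add hW)).X₂ (d + 1) := h₂
  ExtCyclic.of_shortExact_left (face_shortExact hV hW) h₁

end Colon

section Regular

variable (hU : ∀ F, F ∪ T ∈ U ↔ F ∈ U)

include hU

theorem facePD_inf (h : FacePD K U d) : FacePD K (U ⊓ UpperSet.Ici T) (d + 1) :=
  facePD_add (T := T) (fun F ↦ (hU F).symm) (by simp) h (facePD_mono h (by omega))

theorem faceCyclic_inf (h : FacePD K U d) (h' : FaceCyclic K U d) :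
    FaceCyclic K (U ⊓ UpperSet.Ici T) (d + 1) :=
  faceCyclic_add (T := T) (fun F ↦ (hU F).symm) (by simp) h' h

theorem faceNZ_inf (hT : T.Nonempty) (h : FaceNZ K U d) :
    FaceNZ K (U ⊓ UpperSet.Ici T) (d + 1) := by
  refine nontrivial_ext_of_precomp_eq_zero (face_shortExact (K := K) (T := T) (V := U) (U := U)
    (fun F ↦ (hU F).symm) (by simp)) h fun x ↦ ?_
  have : (colonComplex (sqfreeMonomial K T) (mem_faceIdeal_colon fun F ↦ (hU F).symm)
      (mem_faceIdeal_add (W := U ⊓ UpperSet.Ici T) (by simp))).f =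
      sqfreeMonomial K T • 𝟙 (faceModule K U) := mulQuot_self _ _ _
  rw [this]
  exact smul_id_comp_ext_eq_zero (sqfreeMonomial_smul K hT) x

end Regular

omit [DecidableEq σ] in
theorem faceIdeal_top : faceIdeal K (⊤ : UpperSet (Finset σ)) = ⊥ := by
  simp [faceIdeal]

omit [DecidableEq σ] in
theorem facePD_top : FacePD K (⊤ : UpperSet (Finset σ)) 0 := by
  have : Module.Projective (MvPolynomial σ K) (MvPolynomial σ K ⧸ faceIdeal K ⊤) :=
    .of_equiv (Submodule.quotEquivOfEqBot _ faceIdeal_top).symm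
  have := (IsProjective.iff_projective (R := MvPolynomial σ K)
    (MvPolynomial σ K ⧸ faceIdeal K ⊤)).1 this
  infer_instance

variable (K σ) in
/-- The map `R ⟶ K` to the residue field. -/
noncomputable def toResidue :
    faceModule K (⊤ : UpperSet (Finset σ)) ⟶ residueModule K σ :=
  ModuleCat.ofHom (X := MvPolynomial σ K ⧸ faceIdeal K ⊤) (Y := residueModule K σ)
    (Submodule.liftQ _ (LinearMap.toSpanSingleton (MvPolynomial σ K) (residueModule K σ) (1 : K))
      (by simp [faceIdeal_top]))

omit [DecidableEq σ] in
theorem toResidue_one : (toResidue K σ).hom (Ideal.Quotient.mk _ 1) = (1 : K) := by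
  exact one_smul (MvPolynomial σ K) (show residueModule K σ from (1 : K))

omit [DecidableEq σ] in
theorem faceNZ_top : FaceNZ K (⊤ : UpperSet (Finset σ)) 0 := by
  have : Nontrivial (faceModule K (⊤ : UpperSet (Finset σ)) ⟶ residueModule K σ) := by
    refine nontrivial_of_ne (toResidue K σ) 0 fun h ↦ one_ne_zero (α := K) ?_
    rw [← toResidue_one (σ := σ), h]
    rfl
  exact Abelian.Ext.homEquiv₀.nontrivial

omit [DecidableEq σ] in
theorem faceCyclic_top : FaceCyclic K (⊤ : UpperSet (Finset σ)) 0 := by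
  refine ⟨Abelian.Ext.mk₀ (toResidue K σ), fun x ↦ ?_⟩
  obtain ⟨f, rfl⟩ := Abelian.Ext.homEquiv₀.symm.surjective x
  let c : K := f.hom (Ideal.Quotient.mk _ 1)
  refine ⟨c, ?_⟩
  have hf : f = algebraMap K (MvPolynomial σ K) c • toResidue K σ := by
    refine ModuleCat.hom_ext (LinearMap.ext fun x ↦ ?_)
    obtain ⟨r, rfl⟩ := Ideal.Quotient.mk_surjective x
    have hr : Ideal.Quotient.mk (faceIdeal K (⊤ : UpperSet (Finset σ))) r =
        r • Ideal.Quotient.mk _ 1 := by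
      rw [← Ideal.Quotient.mk_eq_mk, ← Ideal.Quotient.mk_eq_mk, ← Submodule.Quotient.mk_smul]
      simp
    rw [hr, map_smul, map_smul]
    congr 1
    change c = algebraMap K (MvPolynomial σ K) c • (toResidue K σ).hom (Ideal.Quotient.mk _ 1)
    rw [toResidue_one]
    change c = constantCoeff (algebraMap K (MvPolynomial σ K) c) * (1 : K)
    simp [algebraMap_eq]
  rw [← Abelian.Ext.mk₀_smul, ← hf]
  rfl

end FaceIdeal

section Path

variable {σ : Type} [DecidableEq σ]

/-- The finite sets containing two consecutive entries of a list. -/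
def pathFaces : List σ → UpperSet (Finset σ)
  | a :: b :: l => pathFaces (b :: l) ⊓ UpperSet.Ici {a, b}
  | _ => ⊤

@[simp]
theorem pathFaces_nil : pathFaces ([] : List σ) = ⊤ :=
  rfl

@[simp]
theorem pathFaces_singleton (a : σ) : pathFaces [a] = ⊤ :=
  rfl

theorem pathFaces_pair (a b : σ) : pathFaces [a, b] = ⊤ ⊓ UpperSet.Ici {a, b} :=
  rfl

theorem mem_pathFaces_cons {a b : σ} {l : List σ} {F : Finset σ} :
    F ∈ pathFaces (a :: b :: l) ↔ F ∈ pathFaces (b :: l) ∨ a ∈ F ∧ b ∈ F := by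
  simp [pathFaces, Finset.insert_subset_iff]

theorem pathFaces_union {T : Finset σ} :
    ∀ {l : List σ}, (∀ t ∈ T, t ∉ l) → ∀ F, F ∪ T ∈ pathFaces l ↔ F ∈ pathFaces l
  | [], _, _ => by simp [pathFaces]
  | [_], _, _ => by simp [pathFaces]
  | a :: b :: l, h, F => by
    have ha : a ∉ T := fun ha ↦ h a ha (by simp)
    have hb : b ∉ T := fun hb ↦ h b hb (by simp)
    rw [mem_pathFaces_cons, mem_pathFaces_cons,
      pathFaces_union fun t ht h' ↦ h t ht (List.mem_cons_of_mem _ h')]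
    simp [ha, hb]

theorem mem_or_mem_pathFaces_cons {a : σ} {l : List σ} {F : Finset σ} :
    (a ∈ F ∨ F ∈ pathFaces (a :: l)) ↔ a ∈ F ∨ F ∈ pathFaces l := by
  cases l with
  | nil => simp [pathFaces]
  | cons b l =>
    rw [mem_pathFaces_cons]
    grind

theorem mem_or_mem_pathFaces_concat {z : σ} {F : Finset σ} :
    ∀ {l : List σ}, (z ∈ F ∨ F ∈ pathFaces (l ++ [z])) ↔ z ∈ F ∨ F ∈ pathFaces l
  | [] => by simp [pathFaces]
  | [a] => by simp [pathFaces, Finset.insert_subset_iff]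
  | a :: b :: l => by
    have := mem_or_mem_pathFaces_concat (z := z) (F := F) (l := b :: l)
    simp only [List.cons_append, mem_pathFaces_cons] at this ⊢
    grind

theorem mem_pathFaces_concat_concat {y z : σ} {F : Finset σ} :
    ∀ {l : List σ}, F ∈ pathFaces (l ++ [y] ++ [z]) ↔
      F ∈ pathFaces (l ++ [y]) ∨ y ∈ F ∧ z ∈ F
  | [] => by simp [pathFaces, Finset.insert_subset_iff]
  | [a] => by simp [pathFaces, Finset.insert_subset_iff]; tauto
  | a :: b :: l => by
    have := mem_pathFaces_concat_concat (y := y) (z := z) (F := F) (l := b :: l)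
    simp only [List.cons_append, mem_pathFaces_cons] at this ⊢
    grind

variable {K : Type} [Field K]

theorem facePD_pathFaces_and_faceNZ_pathFaces :
    ∀ {l : List σ}, l.Nodup →
      FacePD K (pathFaces l) (2 * l.length / 3) ∧ FaceNZ K (pathFaces l) (2 * l.length / 3)
  | [], _ => by
    rw [pathFaces_nil, show 2 * ([] : List σ).length / 3 = 0 by simp]
    exact ⟨facePD_top, faceNZ_top⟩
  | [a], _ => by
    rw [pathFaces_singleton, show 2 * [a].length / 3 = 0 by simp]
    exact ⟨facePD_top, faceNZ_top⟩
  | [a, b], _ => by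
    rw [pathFaces_pair, show 2 * [a, b].length / 3 = 0 + 1 by simp]
    exact ⟨facePD_inf (T := {a, b}) (by simp) facePD_top,
      faceNZ_inf (T := {a, b}) (by simp) (by simp) faceNZ_top⟩
  | a :: b :: c :: l, hl => by
    have hcl : (c :: l).Nodup := by simp_all
    have hl' : l.Nodup := hcl.of_cons
    simp only [List.nodup_cons, List.mem_cons, not_or] at hl
    have ⟨pd₁, nz₁⟩ := facePD_pathFaces_and_faceNZ_pathFaces hl'
    have ⟨pd₂, _⟩ := facePD_pathFaces_and_faceNZ_pathFaces hcl
    have ha : ∀ F, F ∪ {a} ∈ pathFaces l ↔ F ∈ pathFaces l := pathFaces_union (by simp_all)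
    have hc : ∀ F, F ∪ {c} ∈ pathFaces l ⊓ UpperSet.Ici {a} ↔
        F ∈ pathFaces l ⊓ UpperSet.Ici {a} := by
      intro F
      have := pathFaces_union (l := l) (T := {c}) (by simp_all) F
      simp only [UpperSet.mem_inf_iff, UpperSet.mem_Ici_iff, Finset.singleton_subset_iff,
        Finset.mem_union, Finset.mem_singleton, this, hl.1.2.1, or_false]
    have hb : ∀ F, F ∪ {b} ∈ pathFaces (c :: l) ↔ F ∈ pathFaces (c :: l) :=
      pathFaces_union (by simp_all)
    have hV : ∀ F, F ∈ pathFaces l ⊓ UpperSet.Ici {a} ⊓ UpperSet.Ici {c} ↔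
        F ∪ {b} ∈ pathFaces (a :: b :: c :: l) := by
      intro F
      have := mem_or_mem_pathFaces_cons (a := c) (l := l) (F := F)
      simp only [mem_pathFaces_cons, hb, UpperSet.mem_inf_iff, UpperSet.mem_Ici_iff,
        Finset.singleton_subset_iff, Finset.mem_union, Finset.mem_singleton,
        hl.1.1, Ne.symm hl.2.1.1]
      grind
    have hW : ∀ F, F ∈ pathFaces (c :: l) ⊓ UpperSet.Ici {b} ↔
        F ∈ pathFaces (a :: b :: c :: l) ∨ {b} ⊆ F := by
      intro F
      simp only [mem_pathFaces_cons, UpperSet.mem_inf_iff, UpperSet.mem_Ici_iff,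
        Finset.singleton_subset_iff]
      grind
    have pdV := facePD_inf hc (facePD_inf ha pd₁)
    have nzV := faceNZ_inf hc (by simp) (faceNZ_inf ha (by simp) nz₁)
    have pdW := facePD_inf hb pd₂
    have hd : 2 * (a :: b :: c :: l).length / 3 = 2 * l.length / 3 + 1 + 1 := by
      simp only [List.length_cons]
      omega
    have hd' : 2 * (c :: l).length / 3 + 1 ≤ 2 * l.length / 3 + 1 + 1 := by
      simp only [List.length_cons]
      omega
    rw [hd]
    exact ⟨facePD_of_colon hV hW pdV (facePD_mono pdW hd'),
      faceNZ_of_colon hV hW nzV (facePD_mono pdW hd')⟩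
termination_by l => l.length

theorem facePD_pathFaces {l : List σ} (hl : l.Nodup) : FacePD K (pathFaces l) (2 * l.length / 3) :=
  (facePD_pathFaces_and_faceNZ_pathFaces hl).1

theorem faceNZ_pathFaces {l : List σ} (hl : l.Nodup) : FaceNZ K (pathFaces l) (2 * l.length / 3) :=
  (facePD_pathFaces_and_faceNZ_pathFaces hl).2

theorem faceCyclic_pathFaces :
    ∀ {l : List σ}, l.Nodup → l.length % 3 = 2 → FaceCyclic K (pathFaces l) (2 * l.length / 3)
  | [a, b], _, _ => by
    rw [pathFaces_pair, show 2 * [a, b].length / 3 = 0 + 1 by simp]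
    exact faceCyclic_inf (T := {a, b}) (by simp) facePD_top faceCyclic_top
  | [], _, h => absurd h (by simp)
  | [_], _, h => absurd h (by simp)
  | [_, _, _], _, h => absurd h (by simp)
  | [_, _, _, _], _, h => absurd h (by simp)
  | a :: b :: c :: x :: y :: l, hl, hlen => by
    have hxl : (x :: y :: l).Nodup := by simp_all
    have hyl : (y :: l).Nodup := hxl.of_cons
    simp only [List.nodup_cons, List.mem_cons, not_or] at hl
    simp only [List.length_cons] at hlen
    have pd₁ := facePD_pathFaces (K := K) hyl
    have pd₂ := facePD_pathFaces (K := K) hxl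
    have cy₂ := faceCyclic_pathFaces hxl (by simp only [List.length_cons]; omega)
    have hb : ∀ F, F ∪ {b} ∈ pathFaces (y :: l) ↔ F ∈ pathFaces (y :: l) :=
      pathFaces_union (by simp_all)
    have hx : ∀ F, F ∪ {x} ∈ pathFaces (y :: l) ⊓ UpperSet.Ici {b} ↔
        F ∈ pathFaces (y :: l) ⊓ UpperSet.Ici {b} := by
      intro F
      have := pathFaces_union (l := y :: l) (T := {x}) (by simp_all) F
      simp only [UpperSet.mem_inf_iff, UpperSet.mem_Ici_iff, Finset.singleton_subset_iff,
        Finset.mem_union, Finset.mem_singleton, this, hl.2.1.2.1, or_false]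
    have hab : ∀ F, F ∪ {a, b} ∈ pathFaces (x :: y :: l) ↔ F ∈ pathFaces (x :: y :: l) :=
      pathFaces_union (by simp_all)
    have hc' : ∀ F, F ∪ {c} ∈ pathFaces (x :: y :: l) ↔ F ∈ pathFaces (x :: y :: l) :=
      pathFaces_union (by simp_all)
    have hc : ∀ F, F ∪ {c} ∈ pathFaces (x :: y :: l) ⊓ UpperSet.Ici {a, b} ↔
        F ∈ pathFaces (x :: y :: l) ⊓ UpperSet.Ici {a, b} := by
      intro F
      simp only [UpperSet.mem_inf_iff, UpperSet.mem_Ici_iff, Finset.insert_subset_iff,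
        Finset.singleton_subset_iff, Finset.mem_union, Finset.mem_singleton, hc', hl.1.2.1,
        hl.2.1.1, or_false]
    have hV : ∀ F, F ∈ pathFaces (y :: l) ⊓ UpperSet.Ici {b} ⊓ UpperSet.Ici {x} ↔
        F ∪ {c} ∈ pathFaces (a :: b :: c :: x :: y :: l) := by
      intro F
      have := mem_or_mem_pathFaces_cons (a := x) (l := y :: l) (F := F)
      rw [mem_pathFaces_cons, mem_pathFaces_cons, mem_pathFaces_cons, hc']
      simp only [UpperSet.mem_inf_iff, UpperSet.mem_Ici_iff,
        Finset.singleton_subset_iff, Finset.mem_union, Finset.mem_singleton,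
        hl.1.2.1, hl.2.1.1, Ne.symm hl.2.2.1.1]
      grind
    have hW : ∀ F, F ∈ pathFaces (x :: y :: l) ⊓ UpperSet.Ici {a, b} ⊓ UpperSet.Ici {c} ↔
        F ∈ pathFaces (a :: b :: c :: x :: y :: l) ∨ {c} ⊆ F := by
      intro F
      simp only [mem_pathFaces_cons, UpperSet.mem_inf_iff, UpperSet.mem_Ici_iff,
        Finset.singleton_subset_iff, Finset.insert_subset_iff]
      grind
    have pdV := facePD_inf hx (facePD_inf hb pd₁)
    have cyW := faceCyclic_inf hc (facePD_inf hab pd₂) (faceCyclic_inf hab pd₂ cy₂)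
    have hd : 2 * (a :: b :: c :: x :: y :: l).length / 3 =
        2 * (x :: y :: l).length / 3 + 1 + 1 := by
      simp only [List.length_cons]
      omega
    rw [hd]
    refine faceCyclic_of_add hV hW (facePD_mono pdV ?_) cyW
    simp only [List.length_cons]
    omega
termination_by l => l.length

/-- The finite sets containing two adjacent vertices of the cycle `a, b, q, z`. -/
def cycleFaces (a b : σ) (q : List σ) (z : σ) : UpperSet (Finset σ) :=
  pathFaces (a :: b :: (q ++ [z])) ⊓ UpperSet.Ici {a, z}

section Cycle

variable {a b z : σ} {q : List σ} (hl : (a :: b :: (q ++ [z])).Nodup)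

include hl

theorem facePD_and_faceNZ_link :
    FacePD K (pathFaces q ⊓ UpperSet.Ici {b} ⊓ UpperSet.Ici {z}) (2 * q.length / 3 + 1 + 1) ∧
      FaceNZ K (pathFaces q ⊓ UpperSet.Ici {b} ⊓ UpperSet.Ici {z}) (2 * q.length / 3 + 1 + 1) := by
  have hq : q.Nodup := hl.of_cons.of_cons.of_append_left
  simp only [List.nodup_cons, List.nodup_append, List.mem_append, List.mem_cons, not_or] at hl
  have hb : ∀ F, F ∪ {b} ∈ pathFaces q ↔ F ∈ pathFaces q := pathFaces_union (by simp_all)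
  have hz : ∀ F, F ∪ {z} ∈ pathFaces q ⊓ UpperSet.Ici {b} ↔
      F ∈ pathFaces q ⊓ UpperSet.Ici {b} := by
    intro F
    have := pathFaces_union (l := q) (T := {z}) (by simp; grind) F
    have hbz : b ≠ z := by grind
    simp only [UpperSet.mem_inf_iff, UpperSet.mem_Ici_iff, Finset.singleton_subset_iff,
      Finset.mem_union, Finset.mem_singleton, this, hbz, or_false]
  exact ⟨facePD_inf hz (facePD_inf hb (facePD_pathFaces hq)),
    faceNZ_inf hz (by simp) (faceNZ_inf hb (by simp) (faceNZ_pathFaces hq))⟩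

theorem facePD_and_faceNZ_deletion :
    FacePD K (pathFaces (b :: (q ++ [z])) ⊓ UpperSet.Ici {a}) (2 * (q.length + 2) / 3 + 1) ∧
      FaceNZ K (pathFaces (b :: (q ++ [z])) ⊓ UpperSet.Ici {a}) (2 * (q.length + 2) / 3 + 1) := by
  have ha : ∀ F, F ∪ {a} ∈ pathFaces (b :: (q ++ [z])) ↔ F ∈ pathFaces (b :: (q ++ [z])) :=
    pathFaces_union (by simp_all)
  have hlen : (b :: (q ++ [z])).length = q.length + 2 := by simp
  rw [← hlen]
  exact ⟨facePD_inf ha (facePD_pathFaces hl.of_cons),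
    faceNZ_inf ha (by simp) (faceNZ_pathFaces hl.of_cons)⟩

theorem mem_cycleFaces_link (F : Finset σ) :
    F ∈ pathFaces q ⊓ UpperSet.Ici {b} ⊓ UpperSet.Ici {z} ↔ F ∪ {a} ∈ cycleFaces a b q z := by
  have h₁ := mem_or_mem_pathFaces_cons (a := b) (l := q ++ [z]) (F := F)
  have h₂ := mem_or_mem_pathFaces_concat (z := z) (l := q) (F := F)
  have ha := pathFaces_union (T := {a}) (l := b :: (q ++ [z])) (by simp_all) F
  have hab : b ≠ a := by grind
  have haz : z ≠ a := by grind
  simp only [cycleFaces, mem_pathFaces_cons, ha, UpperSet.mem_inf_iff, UpperSet.mem_Ici_iff,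
    Finset.singleton_subset_iff, Finset.insert_subset_iff,
    Finset.mem_union, Finset.mem_singleton, hab, haz]
  grind

omit hl in
theorem mem_cycleFaces_deletion (F : Finset σ) :
    F ∈ pathFaces (b :: (q ++ [z])) ⊓ UpperSet.Ici {a} ↔ F ∈ cycleFaces a b q z ∨ {a} ⊆ F := by
  simp only [cycleFaces, mem_pathFaces_cons, UpperSet.mem_inf_iff, UpperSet.mem_Ici_iff,
    Finset.singleton_subset_iff, Finset.insert_subset_iff]
  grind

theorem facePD_cycleFaces {d : ℕ} (h₁ : 2 * q.length / 3 + 2 ≤ d)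
    (h₂ : 2 * (q.length + 2) / 3 + 1 ≤ d) : FacePD K (cycleFaces a b q z) d :=
  facePD_of_colon (mem_cycleFaces_link hl) mem_cycleFaces_deletion
    (facePD_mono (facePD_and_faceNZ_link hl).1 h₁) (facePD_mono (facePD_and_faceNZ_deletion hl).1 h₂)

theorem faceNZ_cycleFaces (h : q.length % 3 ≠ 1) :
    FaceNZ K (cycleFaces a b q z) (2 * q.length / 3 + 1 + 1) :=
  faceNZ_of_colon (mem_cycleFaces_link hl) mem_cycleFaces_deletion
    (facePD_and_faceNZ_link hl).2 (facePD_mono (facePD_and_faceNZ_deletion hl).1 (by omega))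

end Cycle

theorem sqfreeMonomial_pair {a z : σ} (h : a ≠ z) :
    (sqfreeMonomial K {a, z} : MvPolynomial σ K) = sqfreeMonomial K {a} * sqfreeMonomial K {z} := by
  simp only [sqfreeMonomial, monomial_mul, mul_one]
  refine congrArg (fun u ↦ monomial u (1 : K)) (Finsupp.ext fun i ↦ ?_)
  simp only [Finsupp.add_apply, Finsupp.indicator_apply]
  grind

theorem faceNZ_cycleFaces_concat {a b y z : σ} {p : List σ}
    (hl : (a :: b :: (p ++ [y] ++ [z])).Nodup) (h : p.length % 3 = 0) :
    FaceNZ K (cycleFaces a b (p ++ [y]) z) (2 * p.length / 3 + 1 + 1 + 1) := by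
  have hyz : (p ++ [y] ++ [z]).Nodup := hl.of_cons.of_cons
  have hby : (a :: b :: (p ++ [y])).Nodup := by grind
  have hab : a ≠ b := by grind
  have haz : a ≠ z := by grind
  have hbz : b ≠ z := by grind
  have hyz' : y ≠ z := by grind
  have hpath := facePD_pathFaces (K := K) hl
  have hb : ∀ F, F ∪ {b} ∈ pathFaces (p ++ [y] ++ [z]) ↔ F ∈ pathFaces (p ++ [y] ++ [z]) :=
    pathFaces_union (by grind)
  have cy := faceCyclic_inf hb (facePD_pathFaces (K := K) hyz)
    (faceCyclic_pathFaces hyz (by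
      simp only [List.length_append, List.length_cons, List.length_nil]
      omega))
  have nz₁ := (facePD_and_faceNZ_link (K := K) hby).2
  have nz₃ := (facePD_and_faceNZ_deletion (K := K) hl).2
  have e₁ : 2 * (a :: b :: (p ++ [y] ++ [z])).length / 3 = 2 * p.length / 3 + 1 + 1 := by
    simp only [List.length_append, List.length_cons, List.length_nil]
    omega
  have e₂ : 2 * (p ++ [y] ++ [z]).length / 3 + 1 = 2 * p.length / 3 + 1 + 1 := by
    simp only [List.length_append, List.length_cons, List.length_nil]
    omega
  have e₃ : 2 * ((p ++ [y]).length + 2) / 3 + 1 = 2 * p.length / 3 + 1 + 1 + 1 := by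
    simp only [List.length_append, List.length_cons, List.length_nil]
    omega
  rw [e₁] at hpath
  rw [e₂] at cy
  rw [e₃] at nz₃
  have ha : ∀ F, F ∪ {a} ∈ pathFaces (b :: (p ++ [y] ++ [z])) ↔
      F ∈ pathFaces (b :: (p ++ [y] ++ [z])) := pathFaces_union (by grind)
  have hz : ∀ F, F ∪ {z} ∈ pathFaces (p ++ [y]) ↔ F ∈ pathFaces (p ++ [y]) :=
    pathFaces_union (by grind)
  have hVa : ∀ F, F ∈ pathFaces (p ++ [y] ++ [z]) ⊓ UpperSet.Ici {b} ↔
      F ∪ {a} ∈ pathFaces (a :: b :: (p ++ [y] ++ [z])) := by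
    intro F
    have := mem_or_mem_pathFaces_cons (a := b) (l := p ++ [y] ++ [z]) (F := F)
    rw [mem_pathFaces_cons, ha]
    simp only [UpperSet.mem_inf_iff, UpperSet.mem_Ici_iff,
      Finset.singleton_subset_iff, Finset.mem_union, Finset.mem_singleton,
      hab.symm]
    grind
  have hWa : ∀ F, F ∈ pathFaces (b :: (p ++ [y] ++ [z])) ⊓ UpperSet.Ici {a} ↔
      F ∈ pathFaces (a :: b :: (p ++ [y] ++ [z])) ∨ {a} ⊆ F := by
    intro F
    rw [mem_pathFaces_cons]
    simp only [UpperSet.mem_inf_iff, UpperSet.mem_Ici_iff,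
      Finset.singleton_subset_iff]
    grind
  have hVz : ∀ F, F ∈ pathFaces p ⊓ UpperSet.Ici {b} ⊓ UpperSet.Ici {y} ↔
      F ∪ {z} ∈ pathFaces (p ++ [y] ++ [z]) ⊓ UpperSet.Ici {b} := by
    intro F
    have h₁ := mem_or_mem_pathFaces_concat (z := y) (l := p) (F := F)
    have h₂ : F ∪ {z} ∈ pathFaces (p ++ [y] ++ [z]) ↔ F ∈ pathFaces (p ++ [y]) ∨ y ∈ F := by
      rw [mem_pathFaces_concat_concat, hz]
      simp [hyz']
    simp only [UpperSet.mem_inf_iff, UpperSet.mem_Ici_iff, h₂,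
      Finset.singleton_subset_iff, Finset.mem_union, Finset.mem_singleton,
      hbz]
    grind
  have hVaz : ∀ F, F ∈ pathFaces p ⊓ UpperSet.Ici {b} ⊓ UpperSet.Ici {y} ↔
      F ∪ {a, z} ∈ pathFaces (a :: b :: (p ++ [y] ++ [z])) := by
    intro F
    rw [hVz, hVa, Finset.union_assoc, Finset.union_comm {z}]
    rfl
  have hWaz : ∀ F, F ∈ cycleFaces a b (p ++ [y]) z ↔
      F ∈ pathFaces (a :: b :: (p ++ [y] ++ [z])) ∨ {a, z} ⊆ F := by
    simp [cycleFaces]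
  refine nontrivial_ext_of_precomp_eq_zero (face_shortExact (K := K) hVaz hWaz) nz₁ fun x ↦ ?_
  have hfac : (colonComplex (sqfreeMonomial K {a, z}) (mem_faceIdeal_colon hVaz)
      (mem_faceIdeal_add hWaz)).f =
      mulQuot _ _ (sqfreeMonomial K {z}) (fun r ↦ (mem_faceIdeal_colon hVz r).1) ≫
        (colonComplex (sqfreeMonomial K {a}) (mem_faceIdeal_colon hVa)
          (mem_faceIdeal_add hWa)).f := by
    refine Eq.trans ?_ (mulQuot_comp _ _ fun r hr ↦ ?_).symm
    · simp only [colonComplex, sqfreeMonomial_pair haz]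
    · rw [← sqfreeMonomial_pair haz]
      exact (mem_faceIdeal_colon hVaz r).1 hr
  have : HasProjectiveDimensionLT (colonComplex (sqfreeMonomial K {a}) (mem_faceIdeal_colon hVa)
      (mem_faceIdeal_add hWa)).X₂ (2 * p.length / 3 + 1 + 1 + 1) := hpath
  have h0 := precomp_eq_zero_of_extCyclic (face_shortExact (K := K) hVa hWa) cy nz₃ x
  exact precomp_eq_zero_of_eq_comp hfac h0

end Path

section ZModCycle

theorem mem_pathFaces_map_range' {σ : Type} [DecidableEq σ] {f : ℕ → σ} {F : Finset σ} {m s : ℕ} :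
    F ∈ pathFaces ((List.range' s m).map f) ↔
      ∃ j, s ≤ j ∧ j + 1 < s + m ∧ f j ∈ F ∧ f (j + 1) ∈ F := by
  induction m generalizing s with
  | zero =>
    simp only [List.range'_zero, List.map_nil, pathFaces_nil, UpperSet.notMem_top, false_iff]
    grind
  | succ m ih =>
    cases m with
    | zero =>
      simp only [zero_add, List.range'_one, List.map_singleton, pathFaces_singleton,
        UpperSet.notMem_top, false_iff]
      grind
    | succ m =>
      rw [List.range'_succ, List.range'_succ, List.map_cons, List.map_cons, mem_pathFaces_cons,
        ← List.map_cons, ← List.range'_succ, ih]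
      constructor
      · rintro (⟨j, hj⟩ | h)
        · exact ⟨j, by omega, by omega, hj.2.2⟩
        · exact ⟨s, le_rfl, by omega, h⟩
      · rintro ⟨j, hj⟩
        rcases eq_or_ne j s with rfl | hjs
        · exact Or.inr hj.2.2
        · exact Or.inl ⟨j, by omega, by omega, hj.2.2⟩

theorem range'_map_concat {α : Type} (f : ℕ → α) (s m : ℕ) :
    (List.range' s m).map f ++ [f (s + m)] = (List.range' s (m + 1)).map f := by
  simp [List.range'_concat]

theorem nodup_cast_range' (n : ℕ) [NeZero n] :
    ((List.range' 0 n).map (Nat.cast : ℕ → ZMod n)).Nodup := by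
  refine List.Nodup.map_on (fun i hi j hj h ↦ ?_) List.nodup_range'
  simp only [List.mem_range'_1, zero_add] at hi hj
  rw [← ZMod.val_cast_of_lt hi.2, ← ZMod.val_cast_of_lt hj.2, h]

/-- The finite sets of vertices containing an edge of the cycle of length `m + 3`. -/
def zmodCycleFaces (m : ℕ) : UpperSet (Finset (ZMod (m + 3))) :=
  cycleFaces (0 : ℕ) (1 : ℕ) ((List.range' 2 m).map Nat.cast) (2 + m : ℕ)

theorem mem_zmodCycleFaces {m : ℕ} {F : Finset (ZMod (m + 3))} :
    F ∈ zmodCycleFaces m ↔ ∃ i ∈ F, i + 1 ∈ F := by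
  rw [zmodCycleFaces, cycleFaces, range'_map_concat, UpperSet.mem_inf_iff]
  change F ∈ pathFaces ((List.range' 0 (m + 3)).map Nat.cast) ∨ _ ↔ _
  rw [mem_pathFaces_map_range',
    UpperSet.mem_Ici_iff, Finset.insert_subset_iff, Finset.singleton_subset_iff]
  have hlast : ((2 + m : ℕ) : ZMod (m + 3)) + 1 = (0 : ℕ) := by
    rw [← Nat.cast_succ, show (2 + m).succ = m + 3 by omega, ZMod.natCast_self, Nat.cast_zero]
  constructor
  · rintro (⟨j, -, -, hj, hj'⟩ | ⟨h0, hm⟩)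
    · exact ⟨j, hj, by simpa using hj'⟩
    · exact ⟨_, hm, hlast ▸ h0⟩
  · rintro ⟨i, hi, hi'⟩
    have hlt := ZMod.val_lt i
    rw [← ZMod.natCast_zmod_val i] at hi hi'
    rcases eq_or_ne i.val (2 + m) with h | h
    · rw [h] at hi hi'
      exact Or.inr ⟨hlast ▸ hi', hi⟩
    · exact Or.inl ⟨i.val, Nat.zero_le _, by omega, hi, by simpa using hi'⟩

variable {K : Type} [Field K]

theorem cycleIdeal_eq_faceIdeal (m : ℕ) :
    cycleIdeal K (m + 3) = faceIdeal K (zmodCycleFaces m) := by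
  apply le_antisymm
  · refine Ideal.span_le.2 ?_
    rintro _ ⟨i, rfl⟩
    simp only [X, monomial_mul, mul_one]
    refine monomial_mem_faceIdeal (mem_zmodCycleFaces.2 ⟨i, ?_, ?_⟩) <;> simp
  · refine Ideal.span_le.2 ?_
    rintro _ ⟨u, hu, rfl⟩
    obtain ⟨i, hi, hi'⟩ := mem_zmodCycleFaces.1 hu
    refine Ideal.mem_of_dvd _ ?_ (Ideal.subset_span ⟨i, rfl⟩)
    have : Fact (1 < m + 3) := ⟨by omega⟩
    have hne : i ≠ i + 1 := by simp
    simp only [X, monomial_mul, mul_one]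
    refine monomial_dvd_monomial.2 ⟨Or.inr fun j ↦ ?_, dvd_rfl⟩
    simp only [Finsupp.mem_support_iff] at hi hi'
    simp only [Finsupp.add_apply, Finsupp.single_apply]
    grind

theorem nodup_zmodCycle (m : ℕ) : (((0 : ℕ) : ZMod (m + 3)) :: ((1 : ℕ) : ZMod (m + 3)) ::
    ((List.range' 2 m).map Nat.cast ++ [((2 + m : ℕ) : ZMod (m + 3))])).Nodup := by
  rw [range'_map_concat]
  exact nodup_cast_range' (m + 3)

theorem facePD_zmodCycleFaces {m d : ℕ} (h₁ : 2 * m / 3 + 2 ≤ d) (h₂ : 2 * (m + 2) / 3 + 1 ≤ d) :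
    FacePD K (zmodCycleFaces m) d :=
  facePD_cycleFaces (nodup_zmodCycle m) (by simpa using h₁) (by simpa using h₂)

theorem faceNZ_zmodCycleFaces {m : ℕ} (h : m % 3 ≠ 1) :
    FaceNZ K (zmodCycleFaces m) (2 * m / 3 + 1 + 1) := by
  have := faceNZ_cycleFaces (K := K) (nodup_zmodCycle m) (by simpa using h)
  simp only [List.length_map, List.length_range'] at this
  exact this

theorem faceNZ_zmodCycleFaces_succ {m : ℕ} (h : m % 3 = 0) :
    FaceNZ K (zmodCycleFaces (m + 1)) (2 * m / 3 + 1 + 1 + 1) := by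
  have hl := nodup_zmodCycle (m + 1)
  rw [← range'_map_concat] at hl
  have := faceNZ_cycleFaces_concat (K := K) hl (by simpa using h)
  rw [range'_map_concat] at this
  simp only [List.length_map, List.length_range'] at this
  exact this

theorem projDim_cycle_of_face {m d : ℕ} (h : FacePD K (zmodCycleFaces m) (d + 1))
    (h' : FaceNZ K (zmodCycleFaces m) (d + 1)) :
    projDim (MvPolynomial (ZMod (m + 3)) K)
      (MvPolynomial (ZMod (m + 3)) K ⧸ cycleIdeal K (m + 3)) = (d + 1 : ℕ) := by
  rw [cycleIdeal_eq_faceIdeal]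
  exact projDim_eq d h _ h'

end ZModCycle

end EdgeIdeal

open EdgeIdeal in
/-- The projective dimension of `R/I(Cₙ)` (`n ≥ 3`) is `2n/3`, `(2n+1)/3`, `(2n-1)/3`
according to `n ≡ 0, 1, 2 (mod 3)`; in particular it does not depend on the field `K`. -/
theorem cycle_projective_dimension (K : Type) [Field K] (n : ℕ) (hn : 3 ≤ n) :
    projDim (MvPolynomial (ZMod n) K) (MvPolynomial (ZMod n) K ⧸ cycleIdeal K n) =
      ((if n % 3 = 0 then 2 * n / 3
        else if n % 3 = 1 then (2 * n + 1) / 3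
        else (2 * n - 1) / 3 : ℕ) : ℕ∞) := by
  obtain ⟨m, rfl⟩ := Nat.exists_eq_add_of_le' hn
  by_cases hm : m % 3 = 1
  · obtain ⟨p, rfl⟩ : ∃ p, m = p + 1 := ⟨m - 1, by omega⟩
    rw [projDim_cycle_of_face (d := 2 * p / 3 + 1 + 1)
      (facePD_zmodCycleFaces (by omega) (by omega)) (faceNZ_zmodCycleFaces_succ (by omega))]
    congr 1
    split_ifs <;> omega
  · rw [projDim_cycle_of_face (d := 2 * m / 3 + 1)
      (facePD_zmodCycleFaces (by omega) (by omega)) (faceNZ_zmodCycleFaces hm)]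
    congr 1
    split_ifs <;> omega
end

section
/- Let $K$ be a field and $n \geq 3$. Then $\operatorname{ara}\, I(C_n) = \operatorname{pd}_R\, R/I(C_n)$, and this common value is $\frac{2n}{3}$ if $n \equiv 0 \pmod 3$, $\frac{2n+1}{3}$ if $n \equiv 1 \pmod 3$, and $\frac{2n-1}{3}$ if $n \equiv 2 \pmod 3$. -/
open MvPolynomial

theorem consecutive_products_mem {R : Type} [CommRing R] {P : Ideal R} (hP : P.IsPrime)
    {q : ℕ → R} {i : ℕ} (h₁ : q (i + 1) * q (i + 2) ∈ P)
    (h₂ : q i * q (i + 1) + q (i + 2) * q (i + 3) ∈ P) :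
    q i * q (i + 1) ∈ P ∧ q (i + 2) * q (i + 3) ∈ P := by
  rcases hP.mem_or_mem h₁ with h | h
  · have := P.mul_mem_left (q i) h
    exact ⟨this, (P.add_mem_iff_right this).1 h₂⟩
  · have := P.mul_mem_right (q (i + 3)) h
    exact ⟨(P.add_mem_iff_left this).1 h₂, this⟩

theorem products_mem_of_mod_three_eq_two {R : Type} [CommRing R] {P : Ideal R} (hP : P.IsPrime)
    {q : ℕ → R} {k : ℕ} (hk : 0 < k) (hq : q (3 * k + 2) = q 0)
    (h₀ : q 0 * q 1 ∈ P)
    (h₁ : ∀ j < k, q (3 * j + 1) * q (3 * j + 2) + q (3 * j + 3) * q (3 * j + 4) ∈ P)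
    (h₂ : ∀ j < k, 0 < j → q 2 * q 3 + q (3 * j + 2) * q (3 * j + 3) ∈ P)
    (h₃ : q 2 * q 3 + q (3 * k + 1) * q (3 * k + 2) ∈ P) :
    ∀ i < 3 * k + 2, q i * q (i + 1) ∈ P := by
  have key : q 2 * q 3 ∈ P := by
    by_contra h
    have hlast : q (3 * k + 1) * q (3 * k + 2) ∉ P := fun h' => h ((P.add_mem_iff_left h').1 h₃)
    rcases hP.mem_or_mem h₀ with h0 | h1
    · exact hlast (P.mul_mem_left _ (hq ▸ h0))
    · have : ∀ j ≤ k, q (3 * j + 1) ∈ P := by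
        intro j
        induction j with
        | zero => intro _; simpa using h1
        | succ j ih =>
          intro hj
          have h4 := (P.add_mem_iff_right (P.mul_mem_right _ (ih (by omega)))).1 (h₁ j (by omega))
          refine (hP.mem_or_mem h4).resolve_left fun h5 => ?_
          rcases Nat.eq_zero_or_pos j with rfl | hj0
          · exact h (P.mul_mem_left _ h5)
          · exact h ((P.add_mem_iff_left (P.mul_mem_left _ h5)).1 (h₂ j (by omega) hj0))
      exact hlast (P.mul_mem_right _ (this k le_rfl))
  have hmid : ∀ j < k, q (3 * j + 2) * q (3 * j + 3) ∈ P := by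
    intro j hj
    rcases Nat.eq_zero_or_pos j with rfl | hj0
    · exact key
    · exact (P.add_mem_iff_right key).1 (h₂ j hj hj0)
  have hlast := (P.add_mem_iff_right key).1 h₃
  intro i hi
  obtain rfl | hi0 := Nat.eq_zero_or_pos i
  · exact h₀
  obtain ⟨j, rfl | rfl | rfl⟩ : ∃ j, i = 3 * j + 1 ∨ i = 3 * j + 2 ∨ i = 3 * j + 3 :=
    ⟨(i - 1) / 3, by omega⟩
  · obtain hj | rfl : j < k ∨ j = k := by omega
    · exact (consecutive_products_mem hP (hmid j hj) (h₁ j hj)).1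
    · exact hlast
  · exact hmid j (by omega)
  · exact (consecutive_products_mem hP (hmid j (by omega)) (h₁ j (by omega))).2

theorem products_mem_of_triples {R : Type} [CommRing R] {P : Ideal R} (hP : P.IsPrime)
    {q : ℕ → R} {k : ℕ} (h₁ : ∀ j < k, q (3 * j + 1) * q (3 * j + 2) ∈ P)
    (h₂ : ∀ j < k, q (3 * j) * q (3 * j + 1) + q (3 * j + 2) * q (3 * j + 3) ∈ P) :
    ∀ i < 3 * k, q i * q (i + 1) ∈ P := by
  intro i hi
  obtain ⟨j, rfl | rfl | rfl⟩ : ∃ j, i = 3 * j ∨ i = 3 * j + 1 ∨ i = 3 * j + 2 :=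
    ⟨i / 3, by omega⟩
  · exact (consecutive_products_mem hP (h₁ j (by omega)) (h₂ j (by omega))).1
  · exact h₁ j (by omega)
  · exact (consecutive_products_mem hP (h₁ j (by omega)) (h₂ j (by omega))).2

theorem exists_radical_generators {R : Type} [CommRing R] {I : Ideal R} {ι : Type} [Fintype ι]
    {s : ℕ} (hs : Fintype.card ι = s) (f : ι → R) (hf : ∀ i, f i ∈ I)
    (h : ∀ P : Ideal R, P.IsPrime → (∀ i, f i ∈ P) → I ≤ P) :
    ∃ f : Fin s → R, (Ideal.span (Set.range f)).radical = I.radical := by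
  refine ⟨f ∘ (Fintype.equivFinOfCardEq hs).symm, ?_⟩
  rw [(Fintype.equivFinOfCardEq hs).symm.surjective.range_comp]
  refine le_antisymm (Ideal.radical_mono (Ideal.span_le.2 ?_)) ?_
  · rintro _ ⟨i, rfl⟩; exact hf i
  · rw [Ideal.radical_le_radical_iff, Ideal.radical_eq_sInf]
    refine le_sInf fun P hP => h P hP.2 fun i => hP.1 (Ideal.subset_span ⟨i, rfl⟩)

theorem exists_cycleIdeal_radical_generators (K : Type) [Field K] (n : ℕ) (hn : 3 ≤ n) :
    ∃ f : Fin (if n % 3 = 0 then 2 * n / 3 else if n % 3 = 1 then (2 * n + 1) / 3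
          else (2 * n - 1) / 3) → MvPolynomial (ZMod n) K,
      (Ideal.span (Set.range f)).radical = (cycleIdeal K n).radical := by
  have : NeZero n := ⟨by omega⟩
  set q : ℕ → MvPolynomial (ZMod n) K := fun i => X (i : ZMod n) with hq
  have ha : ∀ i, q i * q (i + 1) ∈ cycleIdeal K n := fun i =>
    Ideal.subset_span ⟨(i : ZMod n), by simp [hq]⟩
  have hle : ∀ P : Ideal (MvPolynomial (ZMod n) K), (∀ i < n, q i * q (i + 1) ∈ P) →
      cycleIdeal K n ≤ P := by
    refine fun P h => Ideal.span_le.2 ?_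
    rintro _ ⟨i, rfl⟩
    simpa [hq] using h i.val (ZMod.val_lt i)
  have hcyc : ∀ i, q (n + i) = q i := fun i => by simp [hq]
  obtain ⟨k, hk⟩ : ∃ k, n = 3 * k ∨ n = 3 * k + 1 ∨ n = 3 * k + 2 := ⟨n / 3, by omega⟩
  rcases hk with hk | hk | hk
  · refine exists_radical_generators (ι := Fin k ⊕ Fin k) (by simp; split_ifs <;> omega)
      (Sum.elim (fun j => q (3 * j + 1) * q (3 * j + 2))
        (fun j => q (3 * j) * q (3 * j + 1) + q (3 * j + 2) * q (3 * j + 3))) ?_ ?_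
    · rintro (j | j)
      · exact ha _
      · exact add_mem (ha _) (ha _)
    · intro P hP h
      refine hle P (hk ▸ products_mem_of_triples hP (fun j hj => h (Sum.inl ⟨j, hj⟩))
        (fun j hj => h (Sum.inr ⟨j, hj⟩)))
  · refine exists_radical_generators (ι := Option (Fin k ⊕ Fin k)) (by simp; split_ifs <;> omega)
      (fun o => o.elim (q (3 * k) * q (3 * k + 1))
       (Sum.elim (fun j => q (3 * j + 1) * q (3 * j + 2))
        (fun j => q (3 * j) * q (3 * j + 1) + q (3 * j + 2) * q (3 * j + 3)))) ?_ ?_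
    · rintro (_ | j | j)
      · exact ha _
      · exact ha _
      · exact add_mem (ha _) (ha _)
    · intro P hP h
      refine hle P fun i hi => ?_
      obtain hi | rfl : i < 3 * k ∨ i = 3 * k := by omega
      · exact products_mem_of_triples hP (fun j hj => h (some (Sum.inl ⟨j, hj⟩)))
          (fun j hj => h (some (Sum.inr ⟨j, hj⟩))) i hi
      · exact h none
  · refine exists_radical_generators (ι := Option (Fin k ⊕ Fin k)) (by simp; split_ifs <;> omega)
      (fun o => o.elim (q 0 * q 1)
       (Sum.elim (fun j => q (3 * j + 1) * q (3 * j + 2) + q (3 * j + 3) * q (3 * j + 4))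
        (fun j => q 2 * q 3 + if j.1 = 0 then q (3 * k + 1) * q (3 * k + 2)
          else q (3 * j + 2) * q (3 * j + 3)))) ?_ ?_
    · rintro (_ | j | j)
      · exact ha _
      · exact add_mem (ha _) (ha _)
      · refine add_mem (ha _) ?_
        split_ifs
        · exact ha _
        · exact ha _
    · intro P hP h
      refine hle P fun i hi => products_mem_of_mod_three_eq_two hP (k := k) (by omega) ?_ (h none)
        (fun j hj => h (some (Sum.inl ⟨j, hj⟩))) (fun j hj hj0 => ?_) ?_ i (by omega)
      · simpa [← hk] using hcyc 0
      · simpa [hj0.ne'] using h (some (Sum.inr ⟨j, hj⟩))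
      · simpa using h (some (Sum.inr ⟨0, by omega⟩))

section cochain
variable {ι A F G : Type} [CommRing A] [AddCommGroup F] [AddCommGroup G] [Module A F] [Module A G]

/-- Left exterior multiplication by the one-form `a` on cochains indexed by lists. -/
def wedge (a : ι → A) : (List ι → F) → List ι → F
  | _, [] => 0
  | c, j :: l => a j • c l - wedge a (fun u => c (j :: u)) l

/-- The simplicial coboundary on cochains indexed by lists. -/
abbrev coboundary (c : List ι → F) : List ι → F := wedge (fun _ => (1 : ℤ)) c

theorem wedge_nil (a : ι → A) (c : List ι → F) : wedge a c [] = 0 := rfl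

theorem wedge_cons (a : ι → A) (c : List ι → F) (j : ι) (l : List ι) :
    wedge a c (j :: l) = a j • c l - wedge a (fun u => c (j :: u)) l := rfl

theorem coboundary_cons (c : List ι → F) (j : ι) (l : List ι) :
    coboundary c (j :: l) = c l - coboundary (fun u => c (j :: u)) l := by
  rw [coboundary, wedge_cons, one_smul]

theorem wedge_linearMap (a : ι → A) (φ : F →ₗ[A] G) (c : List ι → F) (l : List ι) :
    wedge a (fun u => φ (c u)) l = φ (wedge a c l) := by
  induction l generalizing c with
  | nil => simp [wedge_nil]
  | cons j l ih => rw [wedge_cons, wedge_cons, map_sub, map_smul, ← ih]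

theorem coboundary_map (φ : F →+ G) (c : List ι → F) (l : List ι) :
    coboundary (fun u => φ (c u)) l = φ (coboundary c l) :=
  wedge_linearMap _ φ.toIntLinearMap c l

theorem wedge_add (a : ι → A) (c c' : List ι → F) : wedge a (c + c') = wedge a c + wedge a c' := by
  funext l
  induction l generalizing c c' with
  | nil => simp [wedge_nil]
  | cons j l ih =>
    have := ih (fun u => c (j :: u)) (fun u => c' (j :: u))
    simp only [Pi.add_apply, wedge_cons, smul_add] at this ⊢
    rw [← sub_eq_zero, show (fun u => c (j :: u) + c' (j :: u)) =
      (fun u => c (j :: u)) + (fun u => c' (j :: u)) from rfl, this]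
    abel

theorem wedge_smul (a : ι → A) (r : A) (c : List ι → F) : wedge a (r • c) = r • wedge a c :=
  funext fun l => wedge_linearMap a (r • LinearMap.id) c l

/-- `wedge a` as a linear map. -/
def wedgeHom (a : ι → A) : (List ι → F) →ₗ[A] (List ι → F) where
  toFun := wedge a
  map_add' := wedge_add a
  map_smul' := wedge_smul a

theorem wedge_sub (a : ι → A) (c c' : List ι → F) : wedge a (c - c') = wedge a c - wedge a c' :=
  map_sub (wedgeHom a) c c'

theorem wedge_zero (a : ι → A) : wedge a (0 : List ι → F) = 0 :=
  map_zero (wedgeHom a)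

theorem wedge_cons_fun (a : ι → A) (c : List ι → F) (j : ι) :
    (fun u => wedge a c (j :: u)) = a j • c - wedge a (fun u => c (j :: u)) := rfl

theorem wedge_wedge_swap (a b : ι → A) (c : List ι → F) :
    wedge a (wedge b c) = -wedge b (wedge a c) := by
  funext l
  induction l generalizing c with
  | nil => simp [wedge_nil]
  | cons j l ih =>
    have := ih (fun u => c (j :: u))
    rw [wedge_cons, wedge_cons_fun, Pi.neg_apply, wedge_cons, wedge_cons_fun, wedge_sub, wedge_sub,
      wedge_smul, wedge_smul, Pi.sub_apply, Pi.sub_apply, this]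
    simp only [Pi.neg_apply, Pi.smul_apply]
    abel

theorem wedge_wedge_self (a : ι → A) (c : List ι → F) : wedge a (wedge a c) = 0 := by
  funext l
  induction l generalizing c with
  | nil => rfl
  | cons j l ih =>
    have := ih (fun u => c (j :: u))
    rw [wedge_cons, wedge_cons_fun, wedge_sub, wedge_smul, Pi.sub_apply, this]
    simp

theorem wedge_add_left (a b : ι → A) (c : List ι → F) :
    wedge (a + b) c = wedge a c + wedge b c := by
  funext l
  induction l generalizing c with
  | nil => simp [wedge_nil]
  | cons j l ih =>
    have := ih (fun u => c (j :: u))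
    simp only [Pi.add_apply, wedge_cons, add_smul] at this ⊢
    rw [this]
    abel

theorem wedge_zero_left (c : List ι → F) : wedge (0 : ι → A) c = 0 := by
  have := wedge_add_left (0 : ι → A) 0 c
  simpa using this

theorem wedge_eq_zero_of_forall_mem {a : ι → A} {l : List ι} (h : ∀ j ∈ l, a j = 0)
    (c : List ι → F) : wedge a c l = 0 := by
  induction l generalizing c with
  | nil => rfl
  | cons j l ih =>
    rw [wedge_cons, h j (by simp), ih fun i hi => h i (by simp [hi])]
    simp

theorem wedge_eq_zero_of_forall {S : Set ι} {c : List ι → F}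
    (hc : ∀ l, (∀ j ∈ l, j ∈ S) → c l = 0) (a : ι → A) {l : List ι} (hl : ∀ j ∈ l, j ∈ S) :
    wedge a c l = 0 := by
  induction l generalizing c with
  | nil => rfl
  | cons j l ih =>
    rw [wedge_cons, hc l fun i hi => hl i (by simp [hi]), ih _ fun i hi => hl i (by simp [hi])]
    · simp
    · intro u hu
      refine hc _ fun i hi => ?_
      rcases List.mem_cons.1 hi with rfl | hi
      · exact hl i (by simp)
      · exact hu i hi

theorem length_of_wedge_ne_zero {m : ℕ} {a : ι → A} {c : List ι → F}
    (hc : ∀ l, c l ≠ 0 → l.length = m) {l : List ι} (hl : wedge a c l ≠ 0) : l.length = m + 1 := by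
  by_contra hlm
  refine hl ?_
  clear hl
  induction l generalizing m c with
  | nil => rfl
  | cons j l ih =>
    have h1 : c l = 0 := by
      by_contra h
      exact hlm (by simp [hc l h])
    rw [wedge_cons, h1]
    cases m with
    | zero =>
      have : (fun u => c (j :: u)) = 0 := by
        funext u
        by_contra h
        simpa using hc _ h
      rw [this, wedge_zero]
      simp
    | succ m =>
      rw [ih (m := m) (fun u hu => by simpa using hc _ hu) (by simpa using hlm)]
      simp

/-- The product of the one-forms in the list, applied to the unit cochain. -/
def wedgeProd (K : Type) [AddCommGroupWithOne K] (Λ : List (ι → ℤ)) : List ι → K :=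
  Λ.foldr wedge fun l => if l.isEmpty then 1 else 0

variable {K : Type} [AddCommGroupWithOne K]

theorem wedgeProd_cons (a : ι → ℤ) (Λ : List (ι → ℤ)) :
    wedgeProd K (a :: Λ) = wedge a (wedgeProd K Λ) := rfl

theorem wedge_wedgeProd_of_mem {a : ι → ℤ} {Λ : List (ι → ℤ)} (h : a ∈ Λ) :
    wedge a (wedgeProd K Λ) = 0 := by
  induction Λ with
  | nil => simp at h
  | cons b Λ ih =>
    rw [wedgeProd_cons]
    rcases List.mem_cons.1 h with rfl | h
    · exact wedge_wedge_self _ _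
    · rw [wedge_wedge_swap, ih h, wedge_zero, neg_zero]

theorem wedge_sum_wedgeProd {Λ M : List (ι → ℤ)} (h : M ⊆ Λ) :
    wedge M.sum (wedgeProd K Λ) = 0 := by
  induction M with
  | nil => exact wedge_zero_left _
  | cons a M ih =>
    rw [List.cons_subset] at h
    rw [List.sum_cons, wedge_add_left, ih h.2, wedge_wedgeProd_of_mem h.1, add_zero]

theorem wedgeProd_eq_zero {a : ι → ℤ} {Λ : List (ι → ℤ)} (h : a ∈ Λ) {l : List ι}
    (hl : ∀ j ∈ l, a j = 0) : wedgeProd K Λ l = 0 := by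
  induction Λ generalizing l with
  | nil => simp at h
  | cons b Λ ih =>
    rw [wedgeProd_cons]
    rcases List.mem_cons.1 h with rfl | h
    · exact wedge_eq_zero_of_forall_mem hl _
    · exact wedge_eq_zero_of_forall (S := {j | a j = 0}) (fun l hl => ih h hl) b hl

theorem length_of_wedgeProd_ne_zero {Λ : List (ι → ℤ)} {l : List ι} (h : wedgeProd K Λ l ≠ 0) :
    l.length = Λ.length := by
  induction Λ generalizing l with
  | nil =>
    cases l with
    | nil => rfl
    | cons j l => simp [wedgeProd] at h
  | cons a Λ ih => exact length_of_wedge_ne_zero (fun l hl => ih hl) h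

theorem wedgeProd_cons_eq_zero {Λ : List (ι → ℤ)} {j : ι} (h : ∀ a ∈ Λ, a j = 0) :
    (fun u => wedgeProd K Λ (j :: u)) = 0 := by
  induction Λ with
  | nil => funext u; simp [wedgeProd]
  | cons a Λ ih =>
    rw [wedgeProd_cons, wedge_cons_fun, ih fun b hb => h b (by simp [hb]), h a (by simp),
      wedge_zero]
    simp

theorem wedgeProd_cons_eq {Λ : List (ι → ℤ)} {j : ι} {a : ι → ℤ} (ha : a j = 1)
    (h : ∀ a ∈ Λ, a j = 0) : (fun u => wedgeProd K (a :: Λ) (j :: u)) = wedgeProd K Λ := by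
  rw [wedgeProd_cons, wedge_cons_fun, wedgeProd_cons_eq_zero h, ha, wedge_zero]
  simp

/-- Sum of the values of `b` at the concatenations of `k` disjoint pairs of consecutive entries
of a list. -/
def pairSum : ℕ → List ι → (List ι → F) → F
  | 0, _, b => b []
  | _ + 1, [], _ => 0
  | _ + 1, [_], _ => 0
  | k + 1, x :: y :: L, b => pairSum k L (fun u => b (x :: y :: u)) + pairSum (k + 1) (y :: L) b

/-- As `pairSum`, but with the last entry of the list appended to the pairs. -/
def pairLastSum : ℕ → List ι → (List ι → F) → F
  | _, [], _ => 0
  | 0, [x], b => b [x]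
  | _ + 1, [_], _ => 0
  | 0, _ :: y :: L, b => pairLastSum 0 (y :: L) b
  | k + 1, x :: y :: L, b =>
    pairLastSum k L (fun u => b (x :: y :: u)) + pairLastSum (k + 1) (y :: L) b

theorem pairSum_add : ∀ (k : ℕ) (L : List ι) (b c : List ι → F),
    pairSum k L (b + c) = pairSum k L b + pairSum k L c
  | 0, _, b, c => by simp [pairSum]
  | k + 1, [], b, c => by simp [pairSum]
  | k + 1, [x], b, c => by simp [pairSum]
  | k + 1, x :: y :: L, b, c => by
    have h := pairSum_add k L (fun u => b (x :: y :: u)) (fun u => c (x :: y :: u))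
    have h' := pairSum_add (k + 1) (y :: L) b c
    rw [pairSum, pairSum, pairSum, h', ← sub_eq_zero,
      show (fun u => (b + c) (x :: y :: u)) =
        (fun u => b (x :: y :: u)) + fun u => c (x :: y :: u) from rfl, h]
    abel

theorem pairSum_sub (k : ℕ) (L : List ι) (b c : List ι → F) :
    pairSum k L (b - c) = pairSum k L b - pairSum k L c :=
  map_sub (AddMonoidHom.mk' (pairSum k L) (pairSum_add k L)) b c

theorem pairSum_zero (k : ℕ) (L : List ι) : pairSum k L (0 : List ι → F) = 0 :=
  map_zero (AddMonoidHom.mk' (pairSum k L) (pairSum_add k L))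

theorem pairSum_coboundary : ∀ (k : ℕ) (x : ι) (L : List ι) (b : List ι → F),
    pairSum (k + 1) (x :: L) (coboundary b) =
      pairLastSum k (x :: L) b - pairSum k L (fun u => b (x :: u))
  | 0, x, [], b => by simp [pairSum, pairLastSum]
  | k + 1, x, [], b => by simp [pairSum, pairLastSum]
  | k, x, y :: L, b => by
    have h2 : (fun u => coboundary b (x :: y :: u)) = (fun u => b (y :: u)) -
        (fun u => b (x :: u)) + coboundary (fun u => b (x :: y :: u)) := by
      funext u
      rw [coboundary_cons, coboundary_cons]
      simp only [Pi.add_apply, Pi.sub_apply]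
      abel
    rw [pairSum, h2, pairSum_add, pairSum_sub, pairSum_coboundary k y L b]
    match k, L with
    | 0, L =>
      simp only [pairSum, pairLastSum, wedge_nil]
      abel
    | k + 1, [] =>
      simp only [pairSum, pairLastSum]
      abel
    | k + 1, z :: L =>
      rw [pairSum_coboundary k z L]
      simp only [pairSum, pairLastSum]
      abel

theorem pairSum_cons_of_eq_zero {x : ι} {b : List ι → F} (h : (fun u => b (x :: u)) = 0)
    (k : ℕ) (L : List ι) : pairSum k (x :: L) b = pairSum k L b := by
  match k, L with
  | 0, _ => simp [pairSum]
  | k + 1, [] => rfl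
  | k + 1, y :: L =>
    have : (fun u => b (x :: y :: u)) = 0 := funext fun u => congrFun h (y :: u)
    rw [pairSum, this, pairSum_zero, zero_add]

theorem pairSum_eq_zero_of_forall_mem : ∀ (k : ℕ) (L : List ι) (b : List ι → F),
    (∀ u, (∀ j ∈ u, j ∈ L) → b u = 0) → pairSum k L b = 0
  | 0, _, b, h => by simpa [pairSum] using h [] (by simp)
  | k + 1, [], b, h => rfl
  | k + 1, [x], b, h => rfl
  | k + 1, x :: y :: L, b, h => by
    rw [pairSum, pairSum_eq_zero_of_forall_mem, pairSum_eq_zero_of_forall_mem, add_zero]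
    · exact fun u hu => h u fun j hj => List.mem_cons_of_mem _ (hu j hj)
    · refine fun u hu => h _ fun j hj => ?_
      simp only [List.mem_cons] at hj ⊢
      have := hu j
      tauto

end cochain

section pairs
variable {ι F : Type} [AddCommGroup F]

theorem pairSum_eq_zero_of_weight {w : List ι → ℕ} (hw : w [] = 0) : ∀ (k : ℕ) (L : List ι)
    (_ : ∀ x y, [x, y] <:+: L → ∀ u, w (x :: y :: u) ≤ 3 + w u) (b : List ι → F)
    (_ : ∀ u, w u ≤ 3 * k → b u = 0), pairSum k L b = 0
  | 0, L, _, b, h => by simpa [pairSum] using h [] (by simp [hw])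
  | k + 1, [], _, b, h => rfl
  | k + 1, [x], _, b, h => rfl
  | k + 1, x :: y :: L, hL, b, h => by
    rw [pairSum, pairSum_eq_zero_of_weight hw, pairSum_eq_zero_of_weight hw, add_zero]
    · exact fun p q hpq => hL p q (hpq.trans (List.suffix_cons _ _).isInfix)
    · exact h
    · exact fun p q hpq => hL p q
        (hpq.trans ((List.suffix_cons _ _).isInfix.trans (List.suffix_cons _ _).isInfix))
    · intro u hu
      refine h _ ((hL x y (List.prefix_append [x, y] L).isInfix u).trans (by omega))

theorem pairLastSum_eq_zero_of_weight {w : List ι → ℕ} (hw : w [] = 0) : ∀ (k : ℕ) (L : List ι)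
    (_ : ∀ x y, [x, y] <:+: L → ∀ u, w (x :: y :: u) ≤ 3 + w u) (b : List ι → F)
    (_ : ∀ z ∈ L.getLast?, ∀ u, w u ≤ 3 * k → b (u ++ [z]) = 0), pairLastSum k L b = 0
  | k, [], _, b, h => by simp [pairLastSum]
  | 0, [x], _, b, h => by simpa [pairLastSum] using h x (by simp) [] (by simp [hw])
  | k + 1, [x], _, b, h => rfl
  | 0, x :: y :: L, hL, b, h => by
    rw [pairLastSum]
    refine pairLastSum_eq_zero_of_weight hw 0 _
      (fun p q hpq => hL p q (hpq.trans (List.suffix_cons _ _).isInfix)) b fun z hz => h z ?_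
    rwa [List.getLast?_cons_cons]
  | k + 1, x :: y :: L, hL, b, h => by
    rw [pairLastSum, pairLastSum_eq_zero_of_weight hw, pairLastSum_eq_zero_of_weight hw, add_zero]
    · exact fun p q hpq => hL p q (hpq.trans (List.suffix_cons _ _).isInfix)
    · intro z hz
      refine h z ?_
      rwa [List.getLast?_cons_cons]
    · exact fun p q hpq => hL p q
        (hpq.trans ((List.suffix_cons _ _).isInfix.trans (List.suffix_cons _ _).isInfix))
    · intro z hz u hu
      refine h z ?_ (x :: y :: u)
        ((hL x y (List.prefix_append [x, y] L).isInfix u).trans (by omega))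
      cases L with
      | nil => simp at hz
      | cons c L => rwa [List.getLast?_cons_cons, List.getLast?_cons_cons]
end pairs

/-- The indicator of an interval of residues. -/
def residueIndicator (n a b : ℕ) (i : ZMod n) : ℤ := if a ≤ i.val ∧ i.val < b then 1 else 0

/-- The indicators of `{s}, {s+1, s+2}, {s+3}, {s+4, s+5}, …`, comprising `3k` residues. -/
def tripleIndicators (n : ℕ) : ℕ → ℕ → List (ZMod n → ℤ)
  | 0, _ => []
  | k + 1, s => residueIndicator n s (s + 1) :: residueIndicator n (s + 1) (s + 3) ::
      tripleIndicators n k (s + 3)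

/-- The residues `s, s+1, …, s+m-1`. -/
def residueList (n s m : ℕ) : List (ZMod n) := (List.range' s m).map Nat.cast

section
variable {n : ℕ}

theorem residueIndicator_add {a b c : ℕ} (hab : a ≤ b) (hbc : b ≤ c) :
    residueIndicator n a b + residueIndicator n b c = residueIndicator n a c := by
  funext i
  simp only [residueIndicator, Pi.add_apply]
  split_ifs <;> first | rfl | omega

theorem length_tripleIndicators (k s : ℕ) : (tripleIndicators n k s).length = 2 * k := by
  induction k generalizing s with
  | zero => rfl
  | succ k ih => simp [tripleIndicators, ih]; omega

theorem sum_tripleIndicators (k s : ℕ) :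
    (tripleIndicators n k s).sum = residueIndicator n s (s + 3 * k) := by
  induction k generalizing s with
  | zero =>
    funext i
    simp [tripleIndicators, residueIndicator]
  | succ k ih =>
    rw [tripleIndicators, List.sum_cons, List.sum_cons, ih,
      residueIndicator_add (by omega) (by omega), residueIndicator_add (by omega) (by omega)]
    congr 1; omega

theorem tripleIndicators_apply {k s : ℕ} {a : ZMod n → ℤ} (ha : a ∈ tripleIndicators n k s)
    {i : ZMod n} (hi : i.val < s ∨ s + 3 * k ≤ i.val) : a i = 0 := by
  induction k generalizing s with
  | zero => simp [tripleIndicators] at ha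
  | succ k ih =>
    rw [tripleIndicators, List.mem_cons, List.mem_cons] at ha
    rcases ha with rfl | rfl | ha
    · simp only [residueIndicator]; rw [if_neg (by omega)]
    · simp only [residueIndicator]; rw [if_neg (by omega)]
    · exact ih ha (by omega)

theorem mem_tripleIndicators {k s q : ℕ} (hq : q < k) :
    residueIndicator n (s + 3 * q) (s + 3 * q + 1) ∈ tripleIndicators n k s ∧
      residueIndicator n (s + 3 * q + 1) (s + 3 * q + 3) ∈ tripleIndicators n k s := by
  induction k generalizing s q with
  | zero => omega
  | succ k ih =>
    rw [tripleIndicators]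
    cases q with
    | zero => simp
    | succ q =>
      have := ih (s := s + 3) (q := q) (by omega)
      rw [show s + 3 * (q + 1) = s + 3 + 3 * q by omega]
      simp [this]

theorem residueList_succ (s m : ℕ) :
    residueList n s (m + 1) = (s : ZMod n) :: residueList n (s + 1) m := by
  simp [residueList, List.range'_succ]

theorem exists_of_mem_residueList {s m : ℕ} {i : ZMod n} (h : i ∈ residueList n s m)
    (hs : s + m ≤ n) :
    s ≤ i.val ∧ i.val < s + m := by
  obtain ⟨j, hj, rfl⟩ := List.mem_map.1 h
  rw [List.mem_range'_1] at hj
  rw [ZMod.val_cast_of_lt (by omega)]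
  exact hj

theorem pairSum_tripleIndicators (K : Type) [Field K] (k s : ℕ) (h : s + 3 * k ≤ n) :
    pairSum k (residueList n s (3 * k)) (wedgeProd K (tripleIndicators n k s)) = 1 := by
  induction k generalizing s with
  | zero => simp [pairSum, tripleIndicators, wedgeProd]
  | succ k ih =>
    have hv : ∀ j < n, ((j : ℕ) : ZMod n).val = j := fun j hj => ZMod.val_cast_of_lt hj
    have h0 : (fun u => wedgeProd K (tripleIndicators n (k + 1) s) ((s : ZMod n) :: u)) =
        wedgeProd K (residueIndicator n (s + 1) (s + 3) :: tripleIndicators n k (s + 3)) := by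
      refine wedgeProd_cons_eq ?_ fun a ha => ?_
      · simp [residueIndicator, hv s (by omega)]
      · rcases List.mem_cons.1 ha with rfl | ha
        · simp [residueIndicator, hv s (by omega)]
        · exact tripleIndicators_apply ha (by rw [hv s (by omega)]; omega)
    have h1 : (fun u => wedgeProd K
        (residueIndicator n (s + 1) (s + 3) :: tripleIndicators n k (s + 3))
          (((s + 1 : ℕ) : ZMod n) :: u)) = wedgeProd K (tripleIndicators n k (s + 3)) := by
      refine wedgeProd_cons_eq ?_ fun a ha => ?_
      · simp only [residueIndicator, hv (s + 1) (by omega)]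
        rw [if_pos (by omega)]
      · exact tripleIndicators_apply ha (by rw [hv (s + 1) (by omega)]; omega)
    have h2 : (fun u => wedgeProd K (tripleIndicators n k (s + 3))
        (((s + 1 + 1 : ℕ) : ZMod n) :: u)) = 0 :=
      wedgeProd_cons_eq_zero fun a ha =>
        tripleIndicators_apply ha (by rw [hv (s + 1 + 1) (by omega)]; omega)
    rw [show 3 * (k + 1) = 3 * k + 1 + 1 + 1 by omega, residueList_succ, residueList_succ, pairSum,
      pairSum_eq_zero_of_forall_mem (k + 1), residueList_succ, add_zero]
    · have h3 : (fun u => wedgeProd K (tripleIndicators n (k + 1) s)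
          ((s : ZMod n) :: ((s + 1 : ℕ) : ZMod n) :: u)) =
          wedgeProd K (tripleIndicators n k (s + 3)) := by
        rw [← h1]
        funext u
        exact congrFun h0 (((s + 1 : ℕ) : ZMod n) :: u)
      rw [h3, pairSum_cons_of_eq_zero h2, show s + 1 + 1 + 1 = s + 3 by omega]
      exact ih (s + 3) (by omega)
    · intro u hu
      refine wedgeProd_eq_zero (a := residueIndicator n s (s + 1)) (by simp [tripleIndicators]) ?_
      intro j hj
      have := hu j hj
      rw [← residueList_succ] at this
      have := exists_of_mem_residueList this (by omega)
      simp only [residueIndicator]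
      rw [if_neg (by omega)]

/-- Every vertex of `C` lies on an edge of the list; the edge `j` joins `j` and `j + 1`. -/
def CoversVertices (C : Finset (ZMod n)) (l : List (ZMod n)) : Prop :=
  ∀ i ∈ C, ∃ j ∈ l, i = j ∨ i = j + 1

/-- The number of vertices of `C` on the edges of the list. -/
def coveredCard (C : Finset (ZMod n)) (l : List (ZMod n)) : ℕ :=
  (C.filter fun i => ∃ j ∈ l, i = j ∨ i = j + 1).card

theorem CoversVertices.card_le {C : Finset (ZMod n)} {l : List (ZMod n)} (h : CoversVertices C l) :
    C.card ≤ coveredCard C l :=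
  Finset.card_le_card fun i hi => Finset.mem_filter.2 ⟨hi, h i hi⟩

theorem coveredCard_nil (C : Finset (ZMod n)) : coveredCard C [] = 0 := by
  simp [coveredCard]

theorem coveredCard_append_le (C : Finset (ZMod n)) (l u : List (ZMod n)) :
    coveredCard C (l ++ u) ≤ coveredCard C l + coveredCard C u := by
  refine (Finset.card_le_card ?_).trans (Finset.card_union_le _ _)
  intro i hi
  simp only [Finset.mem_filter, Finset.mem_union, List.mem_append] at hi ⊢
  obtain ⟨hi, j, hj | hj, h⟩ := hi
  · exact Or.inl ⟨hi, j, hj, h⟩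
  · exact Or.inr ⟨hi, j, hj, h⟩

theorem coveredCard_le_of_subset {C S : Finset (ZMod n)} {l : List (ZMod n)}
    (h : ∀ i ∈ C, ∀ j ∈ l, i = j ∨ i = j + 1 → i ∈ S) : coveredCard C l ≤ S.card := by
  refine Finset.card_le_card fun i hi => ?_
  simp only [Finset.mem_filter] at hi
  obtain ⟨hi, j, hj, hij⟩ := hi
  exact h i hi j hj hij

theorem coveredCard_singleton (C : Finset (ZMod n)) (x : ZMod n) : coveredCard C [x] ≤ 2 := by
  refine (coveredCard_le_of_subset (S := {x, x + 1}) ?_).trans Finset.card_le_two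
  simp

theorem coveredCard_consecutive (C : Finset (ZMod n)) (x : ZMod n) :
    coveredCard C [x, x + 1] ≤ 3 := by
  refine (coveredCard_le_of_subset (S := {x, x + 1, x + 1 + 1}) ?_).trans Finset.card_le_three
  simp only [List.mem_cons, List.not_mem_nil, or_false, Finset.mem_insert, Finset.mem_singleton]
  rintro i _ j (rfl | rfl) h <;> tauto

theorem coveredCard_of_isInfix_residueList (C : Finset (ZMod n)) {s m : ℕ} {x y : ZMod n}
    (h : [x, y] <:+: residueList n s m) (u : List (ZMod n)) :
    coveredCard C (x :: y :: u) ≤ 3 + coveredCard C u := by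
  obtain rfl : y = x + 1 := by
    induction m generalizing s with
    | zero => simp [residueList] at h
    | succ m ih =>
      rw [residueList_succ, List.infix_cons_iff] at h
      rcases h with h | h
      · rw [List.cons_prefix_cons] at h
        obtain ⟨rfl, h⟩ := h
        cases m with
        | zero => simp [residueList] at h
        | succ m =>
          rw [residueList_succ, List.cons_prefix_cons] at h
          rw [h.1]; simp
      · exact ih h
  exact (coveredCard_append_le C [x, x + 1] u).trans
    (Nat.add_le_add_right (coveredCard_consecutive C x) _)

end

section
variable {n : ℕ} {K : Type} [Field K]

theorem wedgeProd_eq_zero_of_not_coversVertices {C : Finset (ZMod n)} {Λ : List (ZMod n → ℤ)}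
    (hC : ∀ i ∈ C, ∃ a ∈ Λ, ∀ j, a j ≠ 0 → i = j ∨ i = j + 1) {l : List (ZMod n)}
    (hl : ¬CoversVertices C l) : wedgeProd K Λ l = 0 := by
  simp only [CoversVertices, not_forall] at hl
  obtain ⟨i, hi, hil⟩ := hl
  obtain ⟨a, ha, haj⟩ := hC i hi
  refine wedgeProd_eq_zero ha fun j hj => ?_
  by_contra h
  exact hil ⟨j, hj, haj j h⟩

theorem coboundary_wedgeProd_eq_zero [NeZero n] {Λ : List (ZMod n → ℤ)}
    (hΛ : Λ.sum = residueIndicator n 0 n) : coboundary (wedgeProd K Λ) = 0 := by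
  have := wedge_sum_wedgeProd (K := K) (List.Subset.refl Λ)
  rw [hΛ] at this
  rw [coboundary, ← this]
  congr 1
  funext i
  simp [residueIndicator, ZMod.val_lt]

theorem pairSum_coboundary_eq_zero (C : Finset (ZMod n)) (k : ℕ) (b : List (ZMod n) → K)
    (h₁ : ∀ u, coveredCard C u ≤ 3 * k → b (u ++ [((3 * k + 2 : ℕ) : ZMod n)]) = 0)
    (h₂ : ∀ u, coveredCard C u ≤ 3 * k → b (0 :: u) = 0) :
    pairSum (k + 1) (residueList n 0 (3 * (k + 1))) (coboundary b) = 0 := by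
  have hL := residueList_succ (n := n) 0 (3 * k + 2)
  rw [show 3 * (k + 1) = 3 * k + 2 + 1 by omega, hL, pairSum_coboundary, ← hL,
    pairLastSum_eq_zero_of_weight (coveredCard_nil C),
    pairSum_eq_zero_of_weight (coveredCard_nil C),
    sub_zero]
  · exact fun x y h => coveredCard_of_isInfix_residueList C h
  · simpa using h₂
  · exact fun x y h => coveredCard_of_isInfix_residueList C h
  · intro z hz u hu
    simp only [residueList, List.getLast?_map, List.getLast?_range'] at hz
    obtain rfl : ((3 * k + 2 : ℕ) : ZMod n) = z := by simpa using hz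
    exact h₁ u hu

theorem coboundary_ne_of_card_eq {C : Finset (ZMod n)} {k : ℕ} (hk : 0 < k) (hkn : 3 * k ≤ n)
    (hC : 3 * k ≤ C.card) {β : List (ZMod n) → K}
    (hβ : ∀ l, ¬CoversVertices C l → β l = 0) :
    coboundary β ≠ wedgeProd K (tripleIndicators n k 0) := by
  intro h
  have h1 := pairSum_tripleIndicators K k 0 (n := n) (by omega)
  have hβ' : ∀ l, coveredCard C l < 3 * k → β l = 0 := fun l hl =>
    hβ l fun h => by have := h.card_le; omega
  obtain ⟨k, rfl⟩ : ∃ j, k = j + 1 := ⟨k - 1, by omega⟩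
  rw [← h, pairSum_coboundary_eq_zero C] at h1
  · exact zero_ne_one h1
  · intro u hu
    refine hβ' _ ((coveredCard_append_le _ _ _).trans_lt ?_)
    have := coveredCard_singleton C ((3 * k + 2 : ℕ) : ZMod n)
    omega
  · intro u hu
    refine hβ' _ ((coveredCard_append_le _ [0] _).trans_lt ?_)
    have := coveredCard_singleton C 0
    omega

theorem coboundary_ne_of_lt_card {C : Finset (ZMod n)} {k : ℕ} (hk : 0 < k) (hkn : 3 * k < n)
    (hC : 3 * k < C.card) (he : coveredCard C [((3 * k : ℕ) : ZMod n), 0] ≤ 3)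
    {β : List (ZMod n) → K} (hβ : ∀ l, ¬CoversVertices C l → β l = 0) :
    coboundary β ≠ wedgeProd K (residueIndicator n (3 * k) n :: tripleIndicators n k 0) := by
  intro h
  have h1 := pairSum_tripleIndicators K k 0 (n := n) (by omega)
  have hβ' : ∀ l, coveredCard C l ≤ 3 * k → β l = 0 := fun l hl =>
    hβ l fun h => by have := h.card_le; omega
  have hval : ((3 * k : ℕ) : ZMod n).val = 3 * k := ZMod.val_cast_of_lt hkn
  have h2 := wedgeProd_cons_eq (K := K) (a := residueIndicator n (3 * k) n)
    (Λ := tripleIndicators n k 0) (j := ((3 * k : ℕ) : ZMod n))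
    (by simp only [residueIndicator, hval]; rw [if_pos (by omega)])
    (fun a ha => tripleIndicators_apply ha (by omega))
  rw [← h2, ← h, wedge_cons_fun, one_smul, pairSum_sub,
    pairSum_eq_zero_of_weight (coveredCard_nil C) _ _ _ _ hβ'] at h1
  · obtain ⟨k, rfl⟩ : ∃ j, k = j + 1 := ⟨k - 1, by omega⟩
    rw [pairSum_coboundary_eq_zero C] at h1
    · simp at h1
    · intro u hu
      refine hβ' _ ?_
      refine (Finset.card_le_card ?_).trans ((coveredCard_append_le C
        [((3 * k + 2 : ℕ) : ZMod n), ((3 * k + 2 : ℕ) : ZMod n) + 1] u).trans ?_)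
      · intro i
        simp only [Finset.mem_filter, List.mem_cons, List.mem_append, List.not_mem_nil]
        push_cast
        rw [show 3 * ((k : ZMod n) + 1) = 3 * k + 2 + 1 by ring]
        rintro ⟨hi, j, hj, h⟩
        exact ⟨hi, j, by tauto, h⟩
      · have := coveredCard_consecutive C ((3 * k + 2 : ℕ) : ZMod n)
        omega
    · intro u hu
      refine hβ' _ ((coveredCard_append_le C [_, 0] u).trans ?_)
      omega
  · exact fun x y h => coveredCard_of_isInfix_residueList C h

theorem exists_indicator_mem [NeZero n] {k : ℕ} {i : ZMod n} (hi : i.val < 3 * k) :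
    ∃ a ∈ tripleIndicators n k 0, ∀ j, a j ≠ 0 → i = j ∨ i = j + 1 := by
  have hj {a b : ℕ} {j : ZMod n} (h : residueIndicator n a b j ≠ 0) : a ≤ j.val ∧ j.val < b := by
    by_contra h'
    exact h (if_neg h')
  have heq {j : ZMod n} (h : i.val = j.val + 1) : i = j + 1 := by
    rw [← ZMod.natCast_zmod_val i, h]; simp
  have hm := mem_tripleIndicators (n := n) (k := k) (s := 0) (q := i.val / 3) (by omega)
  obtain h | h | h : i.val % 3 = 0 ∨ i.val % 3 = 1 ∨ i.val % 3 = 2 := by omega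
  · exact ⟨_, hm.1, fun j h' => Or.inl (ZMod.val_injective n (by have := hj h'; omega))⟩
  · exact ⟨_, hm.1, fun j h' => Or.inr (heq (by have := hj h'; omega))⟩
  · refine ⟨_, hm.2, fun j h' => ?_⟩
    obtain h | h : i.val = j.val ∨ i.val = j.val + 1 := by have := hj h'; omega
    · exact Or.inl (ZMod.val_injective n h)
    · exact Or.inr (heq h)

end

theorem exists_vertexSet_cocycle (K : Type) [Field K] {n : ℕ} (hn : 3 ≤ n) :
    ∃ (C : Finset (ZMod n)) (ψ : List (ZMod n) → K),
      (∀ l, ψ l ≠ 0 → l.length = (2 * n + 1) / 3) ∧ coboundary ψ = 0 ∧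
      (∀ l, ¬CoversVertices C l → ψ l = 0) ∧
      ∀ β : List (ZMod n) → K, (∀ l, ¬CoversVertices C l → β l = 0) → coboundary β ≠ ψ := by
  have : NeZero n := ⟨by omega⟩
  have hsum {k : ℕ} (h : 3 * k ≤ n) : (residueIndicator n (3 * k) n ::
      tripleIndicators n k 0).sum = residueIndicator n 0 n := by
    rw [List.sum_cons, sum_tripleIndicators, add_comm, zero_add,
      residueIndicator_add (by omega) (by omega)]
  have hj {a b : ℕ} {j : ZMod n} (h : residueIndicator n a b j ≠ 0) : a ≤ j.val ∧ j.val < b := by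
    by_contra h'
    exact h (if_neg h')
  have hn0 : (n : ZMod n) = 0 := ZMod.natCast_self n
  obtain ⟨k, hk⟩ : ∃ k, n = 3 * k ∨ n = 3 * k + 1 ∨ n = 3 * k + 2 := ⟨n / 3, by omega⟩
  rcases hk with hk | hk | hk
  · refine ⟨Finset.univ, wedgeProd K (tripleIndicators n k 0), fun l hl => ?_,
      coboundary_wedgeProd_eq_zero ?_,
      fun l hl => wedgeProd_eq_zero_of_not_coversVertices (fun i _ => ?_) hl,
      fun β hβ => coboundary_ne_of_card_eq (by omega) (by omega) (by simp [ZMod.card]; omega) hβ⟩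
    · rw [length_of_wedgeProd_ne_zero hl, length_tripleIndicators]; omega
    · rw [sum_tripleIndicators]; congr 1; omega
    · exact exists_indicator_mem (by have := i.val_lt; omega)
  · refine ⟨Finset.univ, wedgeProd K (residueIndicator n (3 * k) n :: tripleIndicators n k 0),
      fun l hl => ?_, coboundary_wedgeProd_eq_zero (hsum (by omega)),
      fun l hl => wedgeProd_eq_zero_of_not_coversVertices (fun i _ => ?_) hl,
      fun β hβ => coboundary_ne_of_lt_card (by omega) (by omega) (by simp [ZMod.card]; omega) ?_ hβ⟩
    · rw [length_of_wedgeProd_ne_zero hl, List.length_cons, length_tripleIndicators]; omega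
    · obtain h | h : i.val < 3 * k ∨ i.val = 3 * k := by have := i.val_lt; omega
      · obtain ⟨a, ha, h⟩ := exists_indicator_mem h
        exact ⟨a, List.mem_cons_of_mem _ ha, h⟩
      · exact ⟨_, List.mem_cons_self, fun j h' =>
          Or.inl (ZMod.val_injective n (by have := hj h'; omega))⟩
    · have h0 : ((3 * k : ℕ) : ZMod n) + 1 = 0 := by
        rw [← Nat.cast_add_one, ← hk]
        exact hn0
      have := coveredCard_consecutive Finset.univ ((3 * k : ℕ) : ZMod n)
      rwa [h0] at this
  · refine ⟨Finset.univ.erase ((3 * k : ℕ) : ZMod n),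
      wedgeProd K (residueIndicator n (3 * k) n :: tripleIndicators n k 0),
      fun l hl => ?_, coboundary_wedgeProd_eq_zero (hsum (by omega)),
      fun l hl => wedgeProd_eq_zero_of_not_coversVertices (fun i hi => ?_) hl,
      fun β hβ => coboundary_ne_of_lt_card (by omega) (by omega)
        (by rw [Finset.card_erase_of_mem (Finset.mem_univ _), Finset.card_univ, ZMod.card]; omega)
        ?_ hβ⟩
    · rw [length_of_wedgeProd_ne_zero hl, List.length_cons, length_tripleIndicators]; omega
    · have hi' : i.val ≠ 3 * k := by
        intro h
        apply Finset.ne_of_mem_erase hi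
        rw [← h, ZMod.natCast_zmod_val]
      obtain h | h : i.val < 3 * k ∨ i.val = 3 * k + 1 := by have := i.val_lt; omega
      · obtain ⟨a, ha, h⟩ := exists_indicator_mem h
        exact ⟨a, List.mem_cons_of_mem _ ha, h⟩
      · refine ⟨_, List.mem_cons_self, fun j h' => ?_⟩
        obtain h'' | h'' : i.val = j.val ∨ i.val = j.val + 1 := by have := hj h'; omega
        · exact Or.inl (ZMod.val_injective n h'')
        · right
          rw [← ZMod.natCast_zmod_val i, h'']; simp
    · refine (coveredCard_le_of_subset
        (S := {((3 * k : ℕ) : ZMod n) + 1, 0, 0 + 1}) ?_).trans Finset.card_le_three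
      simp only [Finset.mem_erase, List.mem_cons, List.not_mem_nil, or_false, Finset.mem_insert,
        Finset.mem_singleton]
      rintro i ⟨hi, _⟩ j (rfl | rfl) h <;> tauto

open CategoryTheory

theorem subsingleton_derivedExt_iff {R : Type} [CommRing R] (M N : ModuleCat.{0} R) (p : ℕ) :
    Subsingleton (((Ext R (ModuleCat R) (p+1)).obj (Opposite.op M)).obj N) ↔
      Subsingleton (Abelian.Ext M N (p+1)) := by
  obtain ⟨P⟩ : Nonempty (ProjectiveResolution M) := HasProjectiveResolution.out
  have h1 : Subsingleton (((Ext R (ModuleCat R) (p+1)).obj (Opposite.op M)).obj N) ↔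
      ∀ f : P.complex.X (p+1) ⟶ N, P.complex.d (p+2) (p+1) ≫ f = 0 →
        ∃ g : P.complex.X p ⟶ N, P.complex.d (p+1) p ≫ g = f := by
    rw [← ModuleCat.isZero_iff_subsingleton, Iso.isZero_iff (P.isoExt (p+1) N),
      ← HomologicalComplex.exactAt_iff_isZero_homology,
      HomologicalComplex.exactAt_iff' _ p (p+1) (p+2) (by simp) (by simp),
      ShortComplex.moduleCat_exact_iff]
    rfl
  rw [h1]
  constructor
  · intro h
    refine ⟨fun a b => ?_⟩
    suffices ∀ a : Abelian.Ext M N (p+1), a = 0 by rw [this a, this b]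
    intro a
    obtain ⟨f, hf, rfl⟩ := P.extMk_surjective a (p+2) rfl
    rw [P.extMk_eq_zero_iff _ _ _ _ p rfl]
    exact h f hf
  · intro h f hf
    exact (P.extMk_eq_zero_iff f (p+2) rfl hf p rfl).1 (Subsingleton.elim _ _)

theorem subsingleton_derivedExt_iff_hasProjectiveDimensionLT {R : Type} [CommRing R]
    (M : ModuleCat.{0} R) (d : ℕ) :
    (∀ i : ℕ, d < i → ∀ N : ModuleCat.{0} R,
      Subsingleton (((Ext R (ModuleCat R) i).obj (Opposite.op M)).obj N)) ↔
    HasProjectiveDimensionLT M (d+1) := by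
  constructor
  · intro h
    refine HasProjectiveDimensionLT.mk (fun i hi Y => ?_)
    obtain ⟨p, rfl⟩ : ∃ p, i = p+1 := ⟨i-1, by omega⟩
    have := (subsingleton_derivedExt_iff M Y p).1 (h _ (by omega) Y)
    intro e
    exact Subsingleton.elim _ _
  · intro h i hi N
    obtain ⟨p, rfl⟩ : ∃ p, i = p+1 := ⟨i-1, by omega⟩
    rw [subsingleton_derivedExt_iff]
    exact HasProjectiveDimensionLT.subsingleton M (d+1) (p+1) (by omega) N

/-- The projective dimension of `R ⧸ I` is at most `d`. -/
abbrev QuotPDLE {R : Type} [CommRing R] (I : Ideal R) (d : ℕ) : Prop :=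
  HasProjectiveDimensionLE (ModuleCat.of R (R ⧸ I)) d

section colon
variable {R : Type} [CommRing R] {I J : Ideal R} {a : R}

theorem exists_shortExact_colon (hJ : ∀ r, r ∈ J ↔ a * r ∈ I) :
    ∃ S : ShortComplex (ModuleCat.{0} R), S.ShortExact ∧ S.X₁ = ModuleCat.of R (R ⧸ J) ∧
      S.X₂ = ModuleCat.of R (R ⧸ I) ∧ S.X₃ = ModuleCat.of R (R ⧸ I ⊔ Ideal.span {a}) := by
  let f : (R ⧸ J) →ₗ[R] (R ⧸ I) :=
    Submodule.mapQ J I (LinearMap.mulLeft R a) (fun r hr => (hJ r).1 hr)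
  let g : (R ⧸ I) →ₗ[R] (R ⧸ I ⊔ Ideal.span {a}) :=
    Submodule.mapQ I (I ⊔ Ideal.span {a}) LinearMap.id (fun r hr => Ideal.mem_sup_left hr)
  have hex : Function.Exact f g := by
    intro y
    obtain ⟨y, rfl⟩ := Submodule.Quotient.mk_surjective _ y
    have h1 : g (Submodule.Quotient.mk y) = 0 ↔ y ∈ I ⊔ Ideal.span {a} :=
      Submodule.Quotient.mk_eq_zero _
    rw [h1, Submodule.mem_sup]
    constructor
    · rintro ⟨u, hu, w, hw, rfl⟩
      obtain ⟨c, rfl⟩ := Ideal.mem_span_singleton'.1 hw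
      refine ⟨Submodule.Quotient.mk c, ?_⟩
      change Submodule.Quotient.mk (a * c) = _
      rw [Submodule.Quotient.eq, mul_comm a c]
      simpa using I.neg_mem hu
    · rintro ⟨c, hc⟩
      obtain ⟨c, rfl⟩ := Submodule.Quotient.mk_surjective _ c
      have hc : (Submodule.Quotient.mk (a * c) : R ⧸ I) = Submodule.Quotient.mk y := hc
      rw [Submodule.Quotient.eq] at hc
      refine ⟨y - a * c, by simpa using I.neg_mem hc, a * c,
        Ideal.mem_span_singleton'.2 ⟨c, mul_comm _ _⟩, by ring⟩
  have hinj : Function.Injective f := by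
    rw [injective_iff_map_eq_zero]
    intro y hy
    obtain ⟨y, rfl⟩ := Submodule.Quotient.mk_surjective _ y
    have hy : (Submodule.Quotient.mk (a * y) : R ⧸ I) = 0 := hy
    rw [Submodule.Quotient.mk_eq_zero] at hy ⊢
    exact (hJ y).2 hy
  have hsurj : Function.Surjective g := by
    intro y
    obtain ⟨y, rfl⟩ := Submodule.Quotient.mk_surjective _ y
    exact ⟨Submodule.Quotient.mk y, rfl⟩
  let S : ShortComplex (ModuleCat.{0} R) :=
    ShortComplex.mk (ModuleCat.ofHom f) (ModuleCat.ofHom g)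
      (ModuleCat.hom_ext (LinearMap.ext fun x => (hex _).2 ⟨x, rfl⟩))
  refine ⟨S, ?_, rfl, rfl, rfl⟩
  exact
    { exact := (S.moduleCat_exact_iff).2 fun x hx => (hex x).1 hx
      mono_f := (ModuleCat.mono_iff_injective _).2 hinj
      epi_g := (ModuleCat.epi_iff_surjective _).2 hsurj }

theorem QuotPDLE.of_colon (hJ : ∀ r, r ∈ J ↔ a * r ∈ I) {d : ℕ} (h₁ : QuotPDLE J d)
    (h₂ : QuotPDLE (I ⊔ Ideal.span {a}) d) : QuotPDLE I d := by
  obtain ⟨S, hS, e₁, e₂, e₃⟩ := exists_shortExact_colon hJ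
  rw [QuotPDLE, ← e₂]
  exact hS.hasProjectiveDimensionLT_X₂ _ (e₁ ▸ h₁) (e₃ ▸ h₂)

theorem QuotPDLE.sup_span (hJ : ∀ r, r ∈ I ↔ a * r ∈ I) {d : ℕ} (h : QuotPDLE I d) :
    QuotPDLE (I ⊔ Ideal.span {a}) (d + 1) := by
  obtain ⟨S, hS, e₁, e₂, e₃⟩ := exists_shortExact_colon hJ
  rw [QuotPDLE, ← e₃]
  have : HasProjectiveDimensionLT (ModuleCat.of R (R ⧸ I)) (d + 1) := h
  exact hS.hasProjectiveDimensionLT_X₃ _ (e₁ ▸ h)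
    (e₂ ▸ hasProjectiveDimensionLT_of_ge _ (d + 1) (d + 2) (by omega))

theorem QuotPDLE.mono {d e : ℕ} (h : QuotPDLE I d) (hde : d ≤ e) : QuotPDLE I e := by
  have : HasProjectiveDimensionLT (ModuleCat.of R (R ⧸ I)) (d + 1) := h
  exact hasProjectiveDimensionLT_of_ge _ (d + 1) (e + 1) (by omega)

theorem quotPDLE_bot : QuotPDLE (⊥ : Ideal R) 0 := by
  have h : Projective (ModuleCat.of R R) := inferInstance
  have : HasProjectiveDimensionLT (ModuleCat.of R R) 1 := inferInstance
  exact hasProjectiveDimensionLT_of_iso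
    ((Submodule.quotEquivOfEqBot (⊥ : Submodule R R) rfl).symm.toModuleIso) 1

end colon

section squarefree
variable {σ K : Type} [Field K]

variable (K) in
/-- The ideal spanned by the monomials whose support satisfies `Q`. -/
noncomputable def supportIdeal (Q : Finset σ → Prop) : Ideal (MvPolynomial σ K) :=
  Ideal.span ((fun m => monomial m (1 : K)) '' {m | Q m.support})

theorem mem_supportIdeal {Q : Finset σ → Prop} (hQ : Monotone Q) {p : MvPolynomial σ K} :
    p ∈ supportIdeal K Q ↔ ∀ m ∈ p.support, Q m.support := by
  rw [supportIdeal, mem_ideal_span_monomial_image]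
  refine forall₂_congr fun m _ => ⟨?_, fun h => ⟨m, h, le_rfl⟩⟩
  rintro ⟨s, hs, hsm⟩
  exact hQ (Finsupp.support_mono hsm) hs

theorem monotone_mem_or {Q : Finset σ → Prop} (hQ : Monotone Q) (i : σ) :
    Monotone fun T => i ∈ T ∨ Q T :=
  fun _ _ h => Or.imp (fun hi => h hi) (hQ h)

theorem supportIdeal_mem_or (Q : Finset σ → Prop) (i : σ) :
    supportIdeal K (fun T => i ∈ T ∨ Q T) = supportIdeal K Q ⊔ Ideal.span {X i} := by
  apply le_antisymm
  · rw [supportIdeal, Ideal.span_le]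
    rintro _ ⟨m, hm | hm, rfl⟩
    · refine Ideal.mem_sup_right (Ideal.mem_span_singleton.2 ?_)
      exact (X_dvd_monomial).2 (Or.inr (Finsupp.mem_support_iff.1 hm))
    · exact Ideal.mem_sup_left (Ideal.subset_span ⟨m, hm, rfl⟩)
  · refine sup_le (Ideal.span_mono (Set.image_mono fun m hm => Or.inr hm)) ?_
    rw [Ideal.span_le, Set.singleton_subset_iff]
    refine Ideal.subset_span ⟨Finsupp.single i 1, Or.inl ?_, rfl⟩
    simp

/-- `T` contains two consecutive entries of the list. -/
def HasConsecutive : List σ → Finset σ → Prop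
  | [], _ => False
  | [_], _ => False
  | a :: b :: L, T => (a ∈ T ∧ b ∈ T) ∨ HasConsecutive (b :: L) T

theorem monotone_hasConsecutive : ∀ L : List σ, Monotone (HasConsecutive L)
  | [] => fun _ _ _ h => h
  | [_] => fun _ _ _ h => h
  | _ :: b :: L => fun _ _ hST h =>
      Or.imp (fun h => ⟨hST h.1, hST h.2⟩) (monotone_hasConsecutive (b :: L) hST) h

theorem mem_or_hasConsecutive_cons {c : σ} {T : Finset σ} (L : List σ) :
    (c ∈ T ∨ HasConsecutive (c :: L) T) ↔ (c ∈ T ∨ HasConsecutive L T) := by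
  cases L with
  | nil => simp [HasConsecutive]
  | cons d L => simp only [HasConsecutive]; tauto

theorem quotPDLE_false : QuotPDLE (supportIdeal K fun _ : Finset σ => False) 0 := by
  have : supportIdeal K (fun _ : Finset σ => False) = ⊥ := by simp [supportIdeal]
  rw [this]
  exact quotPDLE_bot

variable [DecidableEq σ]

theorem monotone_insert {Q : Finset σ → Prop} (hQ : Monotone Q) (i : σ) :
    Monotone fun T => Q (insert i T) :=
  fun _ _ h => hQ (Finset.insert_subset_insert i h)

theorem mem_supportIdeal_insert {Q : Finset σ → Prop} (hQ : Monotone Q) (i : σ)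
    (p : MvPolynomial σ K) :
    p ∈ supportIdeal K (fun T => Q (insert i T)) ↔ X i * p ∈ supportIdeal K Q := by
  rw [mem_supportIdeal (monotone_insert hQ i), mem_supportIdeal hQ, support_X_mul]
  simp only [Finset.mem_map, addLeftEmbedding_apply, forall_exists_index, and_imp,
    forall_apply_eq_imp_iff₂]
  refine forall₂_congr fun m _ => ?_
  have : (Finsupp.single i 1 + m).support = insert i m.support := by
    ext j
    by_cases h : i = j <;> simp [h, eq_comm]
  rw [this]

theorem QuotPDLE.of_insert {Q Q₁ Q₂ : Finset σ → Prop} (hQ : Monotone Q) (i : σ) {d : ℕ}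
    (h₁ : QuotPDLE (supportIdeal K Q₁) d) (h₂ : QuotPDLE (supportIdeal K Q₂) d)
    (hQ₁ : ∀ T, Q (insert i T) ↔ Q₁ T) (hQ₂ : ∀ T, (i ∈ T ∨ Q T) ↔ Q₂ T) :
    QuotPDLE (supportIdeal K Q) d := by
  obtain rfl : (fun T => Q (insert i T)) = Q₁ := funext fun T => propext (hQ₁ T)
  obtain rfl : (fun T => i ∈ T ∨ Q T) = Q₂ := funext fun T => propext (hQ₂ T)
  rw [supportIdeal_mem_or] at h₂
  exact QuotPDLE.of_colon (mem_supportIdeal_insert hQ i) h₁ h₂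

theorem QuotPDLE.mem_or {Q : Finset σ → Prop} (hQ : Monotone Q) {i : σ} {d : ℕ}
    (hi : ∀ T, Q (insert i T) ↔ Q T) (h : QuotPDLE (supportIdeal K Q) d) :
    QuotPDLE (supportIdeal K fun T => i ∈ T ∨ Q T) (d + 1) := by
  rw [supportIdeal_mem_or]
  refine QuotPDLE.sup_span (fun r => ?_) h
  rw [← mem_supportIdeal_insert hQ]
  simp only [hi]

theorem hasConsecutive_insert {i : σ} {T : Finset σ} :
    ∀ {L : List σ}, i ∉ L → (HasConsecutive L (insert i T) ↔ HasConsecutive L T)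
  | [], _ => Iff.rfl
  | [_], _ => Iff.rfl
  | a :: b :: L, h => by
      simp only [List.mem_cons, not_or] at h
      simp only [HasConsecutive, Finset.mem_insert, Ne.symm h.1, Ne.symm h.2.1, false_or]
      rw [hasConsecutive_insert (L := b :: L) (by simp [h.2.1, h.2.2])]

theorem quotPDLE_hasConsecutive (m : ℕ) : ∀ L : List σ, L.Nodup → L.length = m →
    QuotPDLE (supportIdeal K (HasConsecutive L)) (2 * m / 3) := by
  induction m using Nat.strong_induction_on with
  | _ m ih =>
    intro L hL hm
    match L, hL, hm with
    | [], _, _ => exact quotPDLE_false.mono (by omega)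
    | [a], _, _ => exact quotPDLE_false.mono (by omega)
    | [a, b], hL, hm =>
      have hab : a ≠ b := by simpa using hL
      simp only [List.length_cons, List.length_nil] at hm
      subst hm
      have h (i : σ) := QuotPDLE.mem_or (i := i) (fun _ _ _ h => h) (fun _ => Iff.rfl)
        (quotPDLE_false (σ := σ) (K := K))
      refine QuotPDLE.of_insert (monotone_hasConsecutive _) b (h a) (h b) (fun T => ?_)
        (fun T => ?_)
      · simp only [HasConsecutive, Finset.mem_insert, hab]
        tauto
      · simp only [HasConsecutive]
        tauto
    | a :: b :: c :: L, hL, hm =>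
      simp only [List.nodup_cons, List.mem_cons, not_or] at hL
      obtain ⟨⟨hab, hac, haL⟩, ⟨hbc, hbL⟩, hcL, hL⟩ := hL
      simp only [List.length_cons] at hm
      have h₁ := (ih L.length (by omega) L hL rfl).mem_or (monotone_hasConsecutive L) (i := c)
        (fun T => hasConsecutive_insert hcL)
      have h₂ := h₁.mem_or (monotone_mem_or (monotone_hasConsecutive L) c) (i := a)
        (fun T => by simp [hasConsecutive_insert haL, Ne.symm hac])
      have h₃ := (ih (c :: L).length (by simp; omega) (c :: L) (by simp [hcL, hL]) rfl).mem_or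
        (monotone_hasConsecutive (c :: L)) (i := b)
        (fun T => hasConsecutive_insert (by simp [hbc, hbL]))
      refine QuotPDLE.of_insert (monotone_hasConsecutive _) b (h₂.mono (e := 2 * m / 3) (by omega))
        (h₃.mono (e := 2 * m / 3) (by simp; omega)) (fun T => ?_) (fun T => ?_)
      · rw [← mem_or_hasConsecutive_cons]
        have := hasConsecutive_insert (i := b) (T := T) (L := c :: L) (by simp [hbc, hbL])
        simp only [HasConsecutive, this, Finset.mem_insert, hab, Ne.symm hbc]
        tauto
      · simp only [HasConsecutive]
        tauto

end squarefree


theorem hasConsecutive_range' {n : ℕ} (T : Finset (ZMod n)) (s len : ℕ) :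
    HasConsecutive ((List.range' s len).map (Nat.cast : ℕ → ZMod n)) T ↔
      ∃ j, s ≤ j ∧ j + 1 < s + len ∧ (j : ZMod n) ∈ T ∧ (j : ZMod n) + 1 ∈ T := by
  induction len generalizing s with
  | zero =>
    simp only [List.range'_zero, List.map_nil, HasConsecutive, false_iff]
    rintro ⟨j, h₁, h₂, _⟩
    omega
  | succ len ih =>
    cases len with
    | zero =>
      simp only [zero_add, List.range'_one, List.map_cons, List.map_nil, HasConsecutive, false_iff]
      rintro ⟨j, h₁, h₂, _⟩
      omega
    | succ len =>
      have h := ih (s + 1)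
      rw [List.range'_succ, List.map_cons] at h
      rw [List.range'_succ, List.range'_succ, List.map_cons, List.map_cons, HasConsecutive, h]
      constructor
      · rintro (⟨h₁, h₂⟩ | ⟨j, h₁, h₂, h₃⟩)
        · exact ⟨s, le_rfl, by omega, h₁, by simpa using h₂⟩
        · exact ⟨j, by omega, by omega, h₃⟩
      · rintro ⟨j, h₁, h₂, h₃, h₄⟩
        rcases h₁.eq_or_lt with rfl | h₁
        · exact Or.inl ⟨h₃, by simpa using h₄⟩
        · exact Or.inr ⟨j, by omega, by omega, h₃, h₄⟩

theorem nodup_map_cast_range' {n s len : ℕ} (h : s + len ≤ n) :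
    ((List.range' s len).map (Nat.cast : ℕ → ZMod n)).Nodup := by
  refine List.Nodup.map_on (fun a ha b hb hab => ?_) List.nodup_range'
  rw [List.mem_range'_1] at ha hb
  rw [ZMod.natCast_eq_natCast_iff'] at hab
  rwa [Nat.mod_eq_of_lt (by omega), Nat.mod_eq_of_lt (by omega)] at hab

theorem cycleIdeal_eq_supportIdeal (K : Type) [Field K] {n : ℕ} (hn : 3 ≤ n) :
    cycleIdeal K n = supportIdeal K fun T => ∃ i : ZMod n, i ∈ T ∧ i + 1 ∈ T := by
  have : Fact (1 < n) := ⟨by omega⟩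
  apply le_antisymm
  · refine Ideal.span_le.2 ?_
    rintro _ ⟨i, rfl⟩
    refine Ideal.subset_span ⟨Finsupp.single i 1 + Finsupp.single (i + 1) 1, ⟨i, ?_, ?_⟩, ?_⟩
    · simp
    · simp
    · simp [X, monomial_mul]
  · refine Ideal.span_le.2 ?_
    rintro _ ⟨m, ⟨i, hi, hi'⟩, rfl⟩
    have hle : Finsupp.single i 1 + Finsupp.single (i + 1) 1 ≤ m := by
      intro j
      simp only [Finsupp.coe_add, Pi.add_apply, Finsupp.single_apply]
      rw [Finsupp.mem_support_iff] at hi hi'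
      split_ifs with h₁ h₂ h₂
      · subst h₁; simp at h₂
      · subst h₁; omega
      · subst h₂; omega
      · omega
    obtain ⟨c, rfl⟩ := exists_add_of_le hle
    have : monomial (Finsupp.single i 1 + Finsupp.single (i + 1) 1 + c) (1 : K) =
        monomial c 1 * (X i * X (i + 1)) := by
      simp [X, monomial_mul, add_comm]
    simp only [this]
    exact Ideal.mul_mem_left _ _ (Ideal.subset_span ⟨i, rfl⟩)

theorem quotPDLE_cycleIdeal (K : Type) [Field K] {n : ℕ} (hn : 3 ≤ n) :
    QuotPDLE (cycleIdeal K n) ((2 * n + 1) / 3) := by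
  have : NeZero n := ⟨by omega⟩
  rw [cycleIdeal_eq_supportIdeal K hn]
  have hmono : Monotone fun T : Finset (ZMod n) => ∃ i : ZMod n, i ∈ T ∧ i + 1 ∈ T :=
    fun S T h ⟨i, hi, hi'⟩ => ⟨i, h hi, h hi'⟩
  have hcast : ∀ {a b : ℕ}, a < n → b < n → ((a : ZMod n) = b ↔ a = b) := fun ha hb => by
    rw [ZMod.natCast_eq_natCast_iff', Nat.mod_eq_of_lt ha, Nat.mod_eq_of_lt hb]
  have hmem : ∀ {a s len : ℕ}, a < n → s + len ≤ n →
      ((a : ZMod n) ∈ (List.range' s len).map (Nat.cast : ℕ → ZMod n) ↔ s ≤ a ∧ a < s + len) := by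
    intro a s len ha hs
    simp only [List.mem_map, List.mem_range'_1]
    constructor
    · rintro ⟨b, hb, hab⟩
      rw [hcast (by omega) ha] at hab
      omega
    · exact fun h => ⟨a, h, rfl⟩
  have hlast : ((n - 1 : ℕ) : ZMod n) + 1 = 0 := by
    rw [← Nat.cast_add_one, Nat.sub_add_cancel (by omega), ZMod.natCast_self]
  have h₁ := (quotPDLE_hasConsecutive (K := K) (n - 3) _
    (nodup_map_cast_range' (n := n) (s := 2) (len := n - 3) (by omega)) (by simp)).mem_or
    (monotone_hasConsecutive _) (i := ((n - 1 : ℕ) : ZMod n))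
    (fun T => hasConsecutive_insert (by rw [hmem (by omega) (by omega)]; omega))
  have h₂ := h₁.mem_or (monotone_mem_or (monotone_hasConsecutive _) _) (i := ((1 : ℕ) : ZMod n))
    (fun T => by
      rw [hasConsecutive_insert (by rw [hmem (by omega) (by omega)]; omega), Finset.mem_insert,
        hcast (by omega) (by omega)]
      have : n - 1 ≠ 1 := by omega
      simp [this])
  have h₃ := (quotPDLE_hasConsecutive (K := K) (n - 1) _
    (nodup_map_cast_range' (n := n) (s := 1) (len := n - 1) (by omega)) (by simp)).mem_or
    (monotone_hasConsecutive _) (i := ((0 : ℕ) : ZMod n))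
    (fun T => hasConsecutive_insert (by rw [hmem (by omega) (by omega)]; omega))
  refine QuotPDLE.of_insert hmono ((0 : ℕ) : ZMod n) (h₂.mono (e := (2 * n + 1) / 3) (by omega))
    (h₃.mono (e := (2 * n + 1) / 3) (by omega)) (fun T => ?_) (fun T => ?_)
  · rw [hasConsecutive_range']
    have hin : ∀ {a : ℕ}, 0 < a → a < n → (a : ZMod n) ∈ insert ((0 : ℕ) : ZMod n) T →
        (a : ZMod n) ∈ T := by
      intro a ha han h
      rw [Finset.mem_insert, hcast han (by omega)] at h
      exact h.resolve_left (by omega)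
    constructor
    · rintro ⟨i, hi, hi'⟩
      obtain ⟨j, hj, rfl⟩ : ∃ j, j < n ∧ (j : ZMod n) = i := ⟨i.val, i.val_lt, by simp⟩
      rw [← Nat.cast_add_one] at hi'
      obtain rfl | hj0 := Nat.eq_zero_or_pos j
      · exact Or.inl (hin (by omega) (by omega) hi')
      obtain rfl | hj1 : j = n - 1 ∨ j < n - 1 := by omega
      · exact Or.inr (Or.inl (hin (by omega) (by omega) hi))
      have h₁ := hin hj0 hj hi
      have h₂ := hin (by omega) (by omega) hi'
      obtain rfl | hj0 : j = 1 ∨ 1 < j := by omega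
      · exact Or.inl h₁
      obtain rfl | hj1 : j = n - 2 ∨ j < n - 2 := by omega
      · exact Or.inr (Or.inl (by rwa [show n - 1 = n - 2 + 1 by omega]))
      · exact Or.inr (Or.inr ⟨j, by omega, by omega, h₁, by simpa using h₂⟩)
    · rintro (h | h | ⟨j, _, _, h₁, h₂⟩)
      · exact ⟨((0 : ℕ) : ZMod n), by simp, by simpa using Or.inr h⟩
      · exact ⟨_, Finset.mem_insert_of_mem h, by rw [hlast]; simp⟩
      · exact ⟨j, Finset.mem_insert_of_mem h₁, Finset.mem_insert_of_mem h₂⟩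
  · rw [hasConsecutive_range']
    refine or_congr_right' fun h0 => ⟨?_, ?_⟩
    · rintro ⟨i, hi, hi'⟩
      obtain ⟨j, hj, rfl⟩ : ∃ j, j < n ∧ (j : ZMod n) = i := ⟨i.val, i.val_lt, by simp⟩
      obtain rfl | hj0 := Nat.eq_zero_or_pos j
      · exact absurd hi h0
      obtain rfl | hj1 : j = n - 1 ∨ j < n - 1 := by omega
      · rw [hlast] at hi'
        exact absurd (by simpa using hi') h0
      · exact ⟨j, by omega, by omega, hi, hi'⟩
    · rintro ⟨j, _, _, h⟩
      exact ⟨j, h⟩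

section resolution
variable {R : Type} [CommRing R]

theorem hasProjectiveDimensionLT_of_exact {A B C : Type} [AddCommGroup A] [AddCommGroup B]
    [AddCommGroup C] [Module R A] [Module R B] [Module R C] [Module.Projective R B]
    {f : A →ₗ[R] B} {g : B →ₗ[R] C} (hf : Function.Injective f) (hg : Function.Surjective g)
    (hfg : Function.Exact f g) {k : ℕ} (h : HasProjectiveDimensionLT (ModuleCat.of R C) (k + 2)) :
    HasProjectiveDimensionLT (ModuleCat.of R A) (k + 1) := by
  let S : ShortComplex (ModuleCat.{0} R) :=
    ShortComplex.mk (ModuleCat.ofHom f) (ModuleCat.ofHom g)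
      (ModuleCat.hom_ext (LinearMap.ext fun x => (hfg _).2 ⟨x, rfl⟩))
  have hS : S.ShortExact :=
    { exact := (S.moduleCat_exact_iff).2 fun x hx => (hfg x).1 hx
      mono_f := (ModuleCat.mono_iff_injective _).2 hf
      epi_g := (ModuleCat.epi_iff_surjective _).2 hg }
  have hB : Projective S.X₂ := (IsProjective.iff_projective B).1 inferInstance
  exact (hS.hasProjectiveDimensionLT_X₃_iff k hB).1 h

variable {M : Type} [AddCommGroup M] [Module R M] {T : ℕ → Submodule R M} {d : M →ₗ[R] M}

theorem hasProjectiveDimensionLT_map (hdd : ∀ x, d (d x) = 0)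
    (hd : ∀ i, ∀ x ∈ T (i + 1), d x ∈ T i)
    (hex : ∀ i, ∀ x ∈ T (i + 1), d x = 0 → ∃ y ∈ T (i + 2), d y = x)
    (hT : ∀ i, Module.Projective R (T i)) (i : ℕ) {k : ℕ}
    (h : HasProjectiveDimensionLT (ModuleCat.of R ((T (i + 1)).map d)) (k + 2)) :
    HasProjectiveDimensionLT (ModuleCat.of R ((T (i + 2)).map d)) (k + 1) := by
  have hle : (T (i + 2)).map d ≤ T (i + 1) := by
    rintro _ ⟨x, hx, rfl⟩
    exact hd _ x hx
  have := hT (i + 1)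
  refine hasProjectiveDimensionLT_of_exact (f := Submodule.inclusion hle)
    (g := d.submoduleMap (T (i + 1))) (Submodule.inclusion_injective hle)
    (d.submoduleMap_surjective _) (fun x => ?_) h
  constructor
  · intro hx
    obtain ⟨y, hy, hyx⟩ := hex i x x.2 (congrArg Subtype.val hx)
    exact ⟨⟨d y, y, hy, rfl⟩, Subtype.ext hyx⟩
  · rintro ⟨⟨_, y, hy, rfl⟩, rfl⟩
    exact Subtype.ext (hdd y)

theorem exists_partial_section (hdd : ∀ x, d (d x) = 0)
    (hd : ∀ i, ∀ x ∈ T (i + 1), d x ∈ T i)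
    (hex : ∀ i, ∀ x ∈ T (i + 1), d x = 0 → ∃ y ∈ T (i + 2), d y = x)
    (hT : ∀ i, Module.Projective R (T i)) (k : ℕ)
    (h : HasProjectiveDimensionLT (ModuleCat.of R ((T 1).map d)) (k + 1)) :
    ∃ q : T (k + 1) →ₗ[R] T (k + 2), ∀ (y : M) (hy : y ∈ T (k + 2)),
      d (q ⟨d y, hd _ y hy⟩) = d y := by
  have key : ∀ i j, i + j = k →
      HasProjectiveDimensionLT (ModuleCat.of R ((T (i + 1)).map d)) (j + 1) := by
    intro i
    induction i with
    | zero => intro j hj; rwa [← hj, zero_add] at h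
    | succ i ih =>
      intro j hj
      exact hasProjectiveDimensionLT_map hdd hd hex hT i (ih (j + 1) (by omega))
  have hZ : Module.Projective R ((T (k + 1)).map d) := by
    have := key k 0 rfl
    rw [← projective_iff_hasProjectiveDimensionLT_one] at this
    exact (IsProjective.iff_projective _).2 this
  obtain ⟨s, hs⟩ := Module.projective_lifting_property (d.submoduleMap (T (k + 1)))
    LinearMap.id (d.submoduleMap_surjective _)
  have hs' : ∀ z, d (s z) = z := fun z => congrArg Subtype.val (LinearMap.congr_fun hs z)
  have hker : ∀ x : T (k + 1), (x : M) - s (d.submoduleMap (T (k + 1)) x) ∈ (T (k + 2)).map d := by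
    intro x
    obtain ⟨y, hy, hyx⟩ := hex k _ (x - s (d.submoduleMap (T (k + 1)) x)).2
      (by simp [hs'])
    exact ⟨y, hy, hyx⟩
  let p : T (k + 1) →ₗ[R] (T (k + 2)).map d :=
    LinearMap.codRestrict _ ((T (k + 1)).subtype -
      (T (k + 1)).subtype ∘ₗ s ∘ₗ d.submoduleMap (T (k + 1))) hker
  have := hT (k + 1)
  obtain ⟨q, hq⟩ := Module.projective_lifting_property (d.submoduleMap (T (k + 2))) p
    (d.submoduleMap_surjective _)
  refine ⟨q, fun y hy => ?_⟩
  have h1 := congrArg Subtype.val (LinearMap.congr_fun hq ⟨d y, hd _ y hy⟩)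
  have h2 : d.submoduleMap (T (k + 1)) ⟨d y, hd _ y hy⟩ = 0 := Subtype.ext (hdd y)
  have h3 : ((p ⟨d y, hd _ y hy⟩ : _) : M) =
      d y - s (d.submoduleMap (T (k + 1)) ⟨d y, hd _ y hy⟩) := rfl
  rw [h2, map_zero] at h3
  exact h1.trans (h3.trans (sub_zero _))

end resolution

section cochain
variable {ι A F : Type} [CommRing A] [AddCommGroup F] [Module A F]

theorem wedge_congr_of_length {m : ℕ} {a : ι → A} {c c' : List ι → F}
    (h : ∀ l : List ι, l.length = m → c l = c' l) {l : List ι} (hl : l.length = m + 1) :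
    wedge a c l = wedge a c' l := by
  induction l generalizing m c c' with
  | nil => rfl
  | cons j l ih =>
    rw [wedge_cons, wedge_cons, h l (by simpa using hl)]
    cases m with
    | zero =>
      obtain rfl : l = [] := by simpa using hl
      rfl
    | succ m =>
      rw [ih (m := m) (fun u hu => h _ (by simpa using hu)) (by simpa using hl)]

theorem coboundary_mem {S : Type} [SetLike S F] [AddSubgroupClass S F] {T : S} {c : List ι → F}
    {l : List ι} (h : ∀ u : List ι, u.Sublist l → u.length + 1 = l.length → c u ∈ T) :
    coboundary c l ∈ T := by
  induction l generalizing c with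
  | nil => exact zero_mem T
  | cons j l ih =>
    rw [coboundary_cons]
    exact sub_mem (h l (List.sublist_cons_self j l) (by simp))
      (ih fun u hu hlen => h _ (hu.cons_cons j) (by simpa using hlen))

end cochain

section taylor
variable {ι σ K : Type} [Field K]

/-- The exponent of the least common multiple of the monomials in the list. -/
noncomputable def lcmExponent (ε : ι → σ →₀ ℕ) : List ι → σ →₀ ℕ
  | [] => 0
  | j :: l => ε j ⊔ lcmExponent ε l

theorem lcmExponent_mono (ε : ι → σ →₀ ℕ) {l l' : List ι} (h : l.Sublist l') :
    lcmExponent ε l ≤ lcmExponent ε l' := by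
  induction h with
  | slnil => exact le_rfl
  | cons j _ ih => exact ih.trans le_sup_right
  | cons_cons j _ ih => exact sup_le_sup le_rfl ih

variable (ι σ K) in
/-- The boundary operator of the full simplex on chains indexed by lists. -/
noncomputable def listBoundary : (List ι →₀ MvPolynomial σ K) →ₗ[MvPolynomial σ K]
    (List ι →₀ MvPolynomial σ K) :=
  Finsupp.linearCombination _ (coboundary fun l => Finsupp.single l 1)

theorem listBoundary_single (l : List ι) (r : MvPolynomial σ K) :
    listBoundary ι σ K (Finsupp.single l r) = coboundary (fun u => Finsupp.single u r) l := by
  rw [listBoundary, Finsupp.linearCombination_single]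
  have := coboundary_map (DistribSMul.toAddMonoidHom (List ι →₀ MvPolynomial σ K) r)
    (fun l => Finsupp.single l 1) l
  simpa using this.symm

theorem linearCombination_listBoundary {N : Type} [AddCommGroup N] [Module (MvPolynomial σ K) N]
    (c : List ι → N) (x : List ι →₀ MvPolynomial σ K) :
    Finsupp.linearCombination (MvPolynomial σ K) c (listBoundary ι σ K x) =
      Finsupp.linearCombination (MvPolynomial σ K) (coboundary c) x := by
  induction x using Finsupp.induction_linear with
  | zero => simp
  | add x y hx hy => simp only [map_add, hx, hy]
  | single l r =>
    rw [listBoundary_single, Finsupp.linearCombination_single]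
    have h1 := coboundary_map (Finsupp.linearCombination (MvPolynomial σ K) c).toAddMonoidHom
      (fun u => Finsupp.single u r) l
    have h2 := coboundary_map (DistribSMul.toAddMonoidHom N r) c l
    simp only [LinearMap.toAddMonoidHom_coe, Finsupp.linearCombination_single] at h1
    exact h1.symm.trans h2

theorem listBoundary_listBoundary (x : List ι →₀ MvPolynomial σ K) :
    listBoundary ι σ K (listBoundary ι σ K x) = 0 := by
  have h : coboundary (coboundary fun l : List ι => Finsupp.single l (1 : MvPolynomial σ K)) = 0 :=
    wedge_wedge_self _ _
  have := linearCombination_listBoundary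
    (coboundary fun l => Finsupp.single l (1 : MvPolynomial σ K)) x
  rw [h, Finsupp.linearCombination_zero] at this
  exact this

variable (K) in
/-- The degree `i` part of the Taylor complex of a family of monomials, embedded in the chains. -/
noncomputable def taylorModule (ε : ι → σ →₀ ℕ) (i : ℕ) :
    Submodule (MvPolynomial σ K) (List ι →₀ MvPolynomial σ K) :=
  Submodule.span _ (Set.range fun l : {l : List ι // l.length = i} =>
    Finsupp.single l.1 (monomial (lcmExponent ε l.1) 1))

variable {ε : ι → σ →₀ ℕ}

theorem single_monomial_mem_taylorModule {i : ℕ} {l : List ι} (hl : l.length = i) {α : σ →₀ ℕ}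
    (h : lcmExponent ε l ≤ α) (c : K) :
    Finsupp.single l (monomial α c) ∈ taylorModule K ε i := by
  obtain ⟨γ, rfl⟩ := exists_add_of_le h
  have := (taylorModule K ε i).smul_mem (monomial γ c) (Submodule.subset_span ⟨⟨l, hl⟩, rfl⟩)
  simpa [monomial_mul, add_comm] using this

theorem taylorModule_induction {i : ℕ} {p : (List ι →₀ MvPolynomial σ K) → Prop} (zero : p 0)
    (add : ∀ x y, p x → p y → p (x + y))
    (single : ∀ (l : List ι) (α : σ →₀ ℕ) (c : K), l.length = i → lcmExponent ε l ≤ α →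
      p (Finsupp.single l (monomial α c))) {x : List ι →₀ MvPolynomial σ K}
    (hx : x ∈ taylorModule K ε i) : p x := by
  induction hx using Submodule.closure_induction with
  | zero => exact zero
  | add x y _ _ hx hy => exact add x y hx hy
  | smul_mem r x hx =>
    obtain ⟨⟨l, hl⟩, rfl⟩ := hx
    rw [Finsupp.smul_single, smul_eq_mul]
    induction r using MvPolynomial.induction_on' with
    | monomial γ c =>
      rw [monomial_mul]
      exact single l _ _ hl le_add_self
    | add f g hf hg =>
      rw [add_mul, Finsupp.single_add]
      exact add _ _ hf hg

theorem projective_taylorModule (i : ℕ) :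
    Module.Projective (MvPolynomial σ K) (taylorModule K ε i) := by
  refine Module.Projective.of_basis (Module.Basis.span ?_)
  rw [linearIndependent_iff]
  intro c hc
  ext1 l
  have h := DFunLike.congr_fun hc l.1
  rw [Finsupp.linearCombination_apply, Finsupp.sum, Finsupp.finsetSum_apply, Finset.sum_eq_single l]
    at h
  · simpa using h
  · intro u _ hu
    have : u.1 ≠ l.1 := fun h => hu (Subtype.ext h)
    simp [this]
  · intro hl
    simp [Finsupp.notMem_support_iff.1 hl]

theorem listBoundary_mem_taylorModule (i : ℕ) (x : List ι →₀ MvPolynomial σ K)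
    (hx : x ∈ taylorModule K ε (i + 1)) : listBoundary ι σ K x ∈ taylorModule K ε i := by
  refine taylorModule_induction (p := fun x => listBoundary ι σ K x ∈ taylorModule K ε i)
    (by simp) (fun x y hx hy => ?_) (fun l α c hl hα => ?_) hx
  · rw [map_add]
    exact add_mem hx hy
  · rw [listBoundary_single]
    exact coboundary_mem fun u hu hlen => single_monomial_mem_taylorModule (by omega)
      ((lcmExponent_mono ε hu).trans hα) c

variable (K) in
open Classical in
/-- The contraction of the Taylor complex prepending an index whose monomial divides. -/
noncomputable def taylorContraction (ε : ι → σ →₀ ℕ) :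
    (List ι →₀ MvPolynomial σ K) →ₗ[K] (List ι →₀ MvPolynomial σ K) :=
  Finsupp.lsum K fun l => (basisMonomials σ K).constr K fun α =>
    if h : ∃ j, ε j ≤ α then Finsupp.single (h.choose :: l) (monomial α 1) else 0

theorem exists_taylorContraction_single {α : σ →₀ ℕ} (h : ∃ j, ε j ≤ α) :
    ∃ j, ε j ≤ α ∧ ∀ (l : List ι) (c : K), taylorContraction K ε (Finsupp.single l (monomial α c)) =
      Finsupp.single (j :: l) (monomial α c) := by
  refine ⟨h.choose, h.choose_spec, fun l c => ?_⟩
  have h1 : monomial α c = c • basisMonomials σ K α := by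
    simp [smul_monomial]
  rw [taylorContraction, Finsupp.lsum_single, h1, map_smul, Module.Basis.constr_basis, dif_pos h,
    Finsupp.smul_single, smul_monomial]
  simp [smul_monomial]

theorem taylorContraction_spec {i : ℕ} {x : List ι →₀ MvPolynomial σ K}
    (hx : x ∈ taylorModule K ε (i + 1)) : taylorContraction K ε x ∈ taylorModule K ε (i + 2) ∧
      listBoundary ι σ K (taylorContraction K ε x) + taylorContraction K ε (listBoundary ι σ K x) =
        x := by
  refine taylorModule_induction (p := fun x => taylorContraction K ε x ∈ taylorModule K ε (i + 2) ∧
    listBoundary ι σ K (taylorContraction K ε x) + taylorContraction K ε (listBoundary ι σ K x) =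
        x) (by simp) (fun x y hx hy => ?_) (fun l α c hl hα => ?_) hx
  · simp only [map_add]
    refine ⟨add_mem hx.1 hy.1, ?_⟩
    rw [add_add_add_comm, hx.2, hy.2]
  · obtain ⟨j, hj, hs⟩ := exists_taylorContraction_single (K := K) (ε := ε) (α := α) (by
      cases l with
      | nil => simp at hl
      | cons j l => exact ⟨j, le_sup_left.trans hα⟩)
    refine ⟨?_, ?_⟩
    · rw [hs]
      exact single_monomial_mem_taylorModule (by simp [hl]) (sup_le hj hα) c
    · rw [hs, listBoundary_single, listBoundary_single, coboundary_cons]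
      have := coboundary_map (taylorContraction K ε).toAddMonoidHom
        (fun u => Finsupp.single u (monomial α c)) l
      simp only [LinearMap.toAddMonoidHom_coe, hs] at this
      rw [← this]
      exact sub_add_cancel _ _

theorem exists_listBoundary_eq (i : ℕ) (x : List ι →₀ MvPolynomial σ K)
    (hx : x ∈ taylorModule K ε (i + 1)) (h : listBoundary ι σ K x = 0) :
    ∃ y ∈ taylorModule K ε (i + 2), listBoundary ι σ K y = x := by
  obtain ⟨h1, h2⟩ := taylorContraction_spec hx
  refine ⟨_, h1, ?_⟩
  rwa [h, map_zero, add_zero] at h2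

end taylor

section taylor
variable {ι σ K : Type} [Field K] {ε : ι → σ →₀ ℕ}

theorem lcmExponent_le {ω : σ →₀ ℕ} (h : ∀ j, ε j ≤ ω) (l : List ι) : lcmExponent ε l ≤ ω := by
  induction l with
  | nil => exact zero_le
  | cons j l ih => exact sup_le (h j) ih

theorem monomial_dvd_linearCombination {χ : σ →₀ ℕ} {ψ : List ι → K}
    (hχ : ∀ l, ψ l ≠ 0 → χ ≤ lcmExponent ε l) {i : ℕ} {x : List ι →₀ MvPolynomial σ K}
    (hx : x ∈ taylorModule K ε i) :
    monomial χ 1 ∣ Finsupp.linearCombination (MvPolynomial σ K) (fun l => C (ψ l)) x := by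
  refine taylorModule_induction (p := fun x => monomial χ 1 ∣
    Finsupp.linearCombination (MvPolynomial σ K) (fun l => C (ψ l)) x) (by simp)
    (fun x y hx hy => ?_) (fun l α c hl hα => ?_) hx
  · rw [map_add]
    exact dvd_add hx hy
  · rw [Finsupp.linearCombination_single, smul_eq_mul]
    by_cases h : ψ l = 0
    · simp [h]
    · refine Dvd.dvd.mul_right (monomial_dvd_monomial.2 ⟨Or.inr ((hχ l h).trans hα), one_dvd _⟩) _

theorem exists_coboundary_eq_of_hasProjectiveDimensionLT {ω : σ →₀ ℕ} (hω : ∀ j, ε j ≤ ω) {k : ℕ}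
    (h : HasProjectiveDimensionLT
      (ModuleCat.of (MvPolynomial σ K) ((taylorModule K ε 1).map (listBoundary ι σ K))) (k + 1))
    {χ : σ →₀ ℕ} {ψ : List ι → K} (hψ : ∀ l, ψ l ≠ 0 → l.length = k + 2)
    (hψ0 : coboundary ψ = 0) (hχ : ∀ l, ψ l ≠ 0 → χ ≤ lcmExponent ε l) :
    ∃ β : List ι → K, coboundary β = ψ ∧
      ∀ l, ¬ (ω - lcmExponent ε l + χ ≤ ω) → β l = 0 := by
  classical
  obtain ⟨q, hq⟩ := exists_partial_section listBoundary_listBoundary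
    (listBoundary_mem_taylorModule (K := K) (ε := ε)) exists_listBoundary_eq
    projective_taylorModule k h
  have hmem : ∀ {i : ℕ} {l : List ι}, l.length = i →
      Finsupp.single l (monomial ω (1 : K)) ∈ taylorModule K ε i :=
    fun hl => single_monomial_mem_taylorModule hl (lcmExponent_le hω _) 1
  let Ψ := Finsupp.linearCombination (MvPolynomial σ K)
    (fun l => C (ψ l) : List ι → MvPolynomial σ K)
  have hΨ : ∀ x, Ψ (listBoundary ι σ K x) = 0 := by
    intro x
    have h1 : coboundary (fun l => (C (ψ l) : MvPolynomial σ K)) = 0 := by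
      funext l
      have h2 := coboundary_map (C : K →+* MvPolynomial σ K).toAddMonoidHom ψ l
      rw [hψ0] at h2
      simpa using h2
    rw [show Ψ (listBoundary ι σ K x) = _ from linearCombination_listBoundary _ x, h1,
      Finsupp.linearCombination_zero]
    rfl
  let c : List ι → taylorModule K ε (k + 1) := fun l =>
    if hl : l.length = k + 1 then ⟨Finsupp.single l (monomial ω 1), hmem hl⟩ else 0
  let φ : taylorModule K ε (k + 1) →+ K :=
    ((lcoeff K ω).toAddMonoidHom.comp Ψ.toAddMonoidHom).comp
      ((taylorModule K ε (k + 2)).subtype.toAddMonoidHom.comp q.toAddMonoidHom)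
  have hφ : ∀ x, φ x = coeff ω (Ψ (q x)) := fun x => rfl
  have hc : ∀ l, l.length ≠ k + 1 → c l = 0 := fun l hl => dif_neg hl
  refine ⟨fun l => φ (c l), ?_, ?_⟩
  · funext u
    by_cases hu : u.length = k + 2
    · have h1 : coboundary c u =
          ⟨listBoundary ι σ K (Finsupp.single u (monomial ω 1)),
            listBoundary_mem_taylorModule _ _ (hmem hu)⟩ := by
        apply Subtype.ext
        have h2 := coboundary_map (taylorModule K ε (k + 1)).subtype.toAddMonoidHom c u
        refine h2.symm.trans (Eq.trans ?_ (listBoundary_single u _).symm)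
        refine (wedge_congr_of_length (m := k + 1) (fun l hl => ?_) hu)
        simp [c, hl]
      rw [coboundary_map, h1, hφ]
      have h3 := hq _ (hmem hu)
      rw [← sub_eq_zero, ← map_sub] at h3
      obtain ⟨y, -, hy⟩ := exists_listBoundary_eq (k + 1) _
        (sub_mem (Subtype.mem _) (hmem hu)) h3
      have h4 := hΨ y
      rw [hy, map_sub, sub_eq_zero] at h4
      rw [h4, show Ψ (Finsupp.single u (monomial ω 1)) = _ from
        Finsupp.linearCombination_single _ _ _, smul_eq_mul, mul_comm, coeff_C_mul]
      simp
    · have h1 : ψ u = 0 := by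
        by_contra h
        exact hu (hψ u h)
      rw [h1]
      by_contra h
      refine hu (length_of_wedge_ne_zero (m := k + 1) (fun l hl => ?_) h)
      by_contra hl'
      exact hl (by simp [hc l hl'])
  · intro l hl
    by_cases hlen : l.length = k + 1
    · have h1 : c l = (monomial (ω - lcmExponent ε l) (1 : K)) •
          (⟨Finsupp.single l (monomial (lcmExponent ε l) 1),
            single_monomial_mem_taylorModule hlen le_rfl 1⟩ : taylorModule K ε (k + 1)) := by
        apply Subtype.ext
        simp only [c, dif_pos hlen, SetLike.val_smul, Finsupp.smul_single, smul_eq_mul,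
          monomial_mul, mul_one]
        rw [tsub_add_cancel_of_le (lcmExponent_le hω l)]
      obtain ⟨r, hr⟩ := monomial_dvd_linearCombination hχ (q (⟨Finsupp.single l
        (monomial (lcmExponent ε l) 1), single_monomial_mem_taylorModule hlen le_rfl 1⟩ :
          taylorModule K ε (k + 1))).2
      have h2 : Ψ (q (c l)) = monomial (ω - lcmExponent ε l + χ) 1 * r := by
        rw [h1, map_smul, SetLike.val_smul, map_smul, smul_eq_mul,
          show Ψ _ = _ from hr, ← mul_assoc, monomial_mul, mul_one]
      change φ (c l) = 0
      rw [hφ, h2, coeff_monomial_mul', if_neg hl]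
    · simp [hc l hlen]

theorem map_listBoundary_taylorModule_one :
    (taylorModule K ε 1).map (listBoundary ι σ K) =
      Submodule.map (Finsupp.lsingle [] : MvPolynomial σ K →ₗ[MvPolynomial σ K] _)
        (Ideal.span (Set.range fun j => monomial (ε j) (1 : K))) := by
  rw [taylorModule, Submodule.map_span, Ideal.span, Submodule.map_span]
  congr 1
  ext x
  constructor
  · rintro ⟨_, ⟨⟨l, hl⟩, rfl⟩, rfl⟩
    obtain ⟨j, rfl⟩ := List.length_eq_one_iff.1 hl
    exact ⟨_, ⟨j, rfl⟩, by simp [listBoundary_single, lcmExponent, coboundary_cons, wedge_nil]⟩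
  · rintro ⟨_, ⟨j, rfl⟩, rfl⟩
    exact ⟨_, ⟨⟨[j], rfl⟩, rfl⟩,
      by simp [listBoundary_single, lcmExponent, coboundary_cons, wedge_nil]⟩

theorem hasProjectiveDimensionLT_map_listBoundary {k : ℕ} (h : HasProjectiveDimensionLT
      (ModuleCat.of (MvPolynomial σ K)
        (MvPolynomial σ K ⧸ Ideal.span (Set.range fun j => monomial (ε j) (1 : K)))) (k + 2)) :
    HasProjectiveDimensionLT
      (ModuleCat.of (MvPolynomial σ K) ((taylorModule K ε 1).map (listBoundary ι σ K)))
      (k + 1) := by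
  set I := Ideal.span (Set.range fun j => monomial (ε j) (1 : K)) with hI
  have h1 : HasProjectiveDimensionLT (ModuleCat.of (MvPolynomial σ K) I) (k + 1) :=
    hasProjectiveDimensionLT_of_exact (f := Submodule.subtype I) (g := Submodule.mkQ I)
      Subtype.val_injective (Submodule.mkQ_surjective I) (LinearMap.exact_subtype_mkQ I) h
  rw [map_listBoundary_taylorModule_one]
  exact hasProjectiveDimensionLT_of_iso (LinearEquiv.toModuleIso
    (Submodule.equivMapOfInjective _ (Finsupp.single_injective _) I)) (k + 1)

end taylor

section cycle
variable {n : ℕ}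

/-- The exponent of the monomial of the edge joining `j` and `j + 1`. -/
noncomputable def edgeExponent (n : ℕ) (j : ZMod n) : ZMod n →₀ ℕ :=
  Finsupp.single j 1 ⊔ Finsupp.single (j + 1) 1

theorem edgeExponent_apply (i j : ZMod n) :
    edgeExponent n j i = if i = j ∨ i = j + 1 then 1 else 0 := by
  classical
  rw [edgeExponent, Finsupp.sup_apply, Finsupp.single_apply, Finsupp.single_apply]
  simp only [eq_comm (b := i)]
  split_ifs <;> simp_all

theorem lcmExponent_edgeExponent_of_mem {l : List (ZMod n)} {i j : ZMod n} (hj : j ∈ l)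
    (h : i = j ∨ i = j + 1) : 1 ≤ lcmExponent (edgeExponent n) l i := by
  induction l with
  | nil => simp at hj
  | cons k l ih =>
    rw [lcmExponent, Finsupp.sup_apply]
    rcases List.mem_cons.1 hj with rfl | hj
    · exact le_sup_of_le_left (by rw [edgeExponent_apply, if_pos h])
    · exact le_sup_of_le_right (ih hj)

theorem lcmExponent_edgeExponent_eq_zero {l : List (ZMod n)} {i : ZMod n}
    (h : ¬∃ j ∈ l, i = j ∨ i = j + 1) : lcmExponent (edgeExponent n) l i = 0 := by
  induction l with
  | nil => rfl
  | cons k l ih =>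
    rw [lcmExponent, Finsupp.sup_apply, edgeExponent_apply, if_neg fun h' => h ⟨k, by simp, h'⟩,
      ih fun ⟨j, hj, hij⟩ => h ⟨j, by simp [hj], hij⟩, max_self]

theorem cycleIdeal_eq_span_monomial (K : Type) [Field K] (hn : 3 ≤ n) :
    cycleIdeal K n = Ideal.span (Set.range fun j => monomial (edgeExponent n j) (1 : K)) := by
  have : Fact (1 < n) := ⟨by omega⟩
  rw [cycleIdeal]
  congr 2
  funext j
  rw [X, X, monomial_mul, one_mul]
  refine congrArg (fun s => monomial s (1 : K)) ?_
  ext i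
  have hj : j ≠ j + 1 := by simp
  rw [edgeExponent_apply, Finsupp.add_apply, Finsupp.single_apply, Finsupp.single_apply]
  simp only [eq_comm (b := i)]
  by_cases h1 : i = j
  · subst h1
    simp
  · simp [h1]

/-- The exponent of the squarefree monomial with the given set of variables. -/
noncomputable def vertexExponent (V : Finset (ZMod n)) : ZMod n →₀ ℕ :=
  Finsupp.indicator V fun _ _ => 1

theorem vertexExponent_le_lcmExponent {V : Finset (ZMod n)} {l : List (ZMod n)}
    (h : CoversVertices V l) : vertexExponent V ≤ lcmExponent (edgeExponent n) l := by
  intro i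
  by_cases hi : i ∈ V
  · obtain ⟨j, hj, hij⟩ := h i hi
    rw [vertexExponent, Finsupp.indicator_of_mem hi]
    exact lcmExponent_edgeExponent_of_mem hj hij
  · rw [vertexExponent, Finsupp.indicator_of_notMem hi]
    exact Nat.zero_le _

theorem not_hasProjectiveDimensionLT_cycleIdeal (K : Type) [Field K] (hn : 3 ≤ n) :
    ¬HasProjectiveDimensionLT
      (ModuleCat.of (MvPolynomial (ZMod n) K) (MvPolynomial (ZMod n) K ⧸ cycleIdeal K n))
      ((2 * n + 1) / 3) := by
  have : NeZero n := ⟨by omega⟩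
  intro h
  obtain ⟨V, ψ, hψ, hψ0, hψV, hψβ⟩ := exists_vertexSet_cocycle K hn
  obtain ⟨k, hk⟩ : ∃ k, (2 * n + 1) / 3 = k + 2 := ⟨(2 * n + 1) / 3 - 2, by omega⟩
  rw [hk] at h hψ
  rw [cycleIdeal_eq_span_monomial K hn] at h
  let ω : ZMod n →₀ ℕ := Finsupp.equivFunOnFinite.symm fun _ => 1
  have hω : ∀ j, edgeExponent n j ≤ ω := fun j i => by
    rw [edgeExponent_apply]
    split_ifs <;> simp [ω]
  obtain ⟨β, hβ, hβ0⟩ := exists_coboundary_eq_of_hasProjectiveDimensionLT hω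
    (hasProjectiveDimensionLT_map_listBoundary h) (χ := vertexExponent V) hψ hψ0 fun l hl =>
      vertexExponent_le_lcmExponent <| by
        by_contra h'
        exact hl (hψV l h')
  refine hψβ β (fun l hl => hβ0 l fun hle => hl fun i hi => ?_) hβ
  by_contra h'
  have := hle i
  simp [vertexExponent, ω, hi, lcmExponent_edgeExponent_eq_zero h'] at this

end cycle

section cochain
variable {ι A F : Type} [CommRing A] [AddCommGroup F] [Module A F]

theorem wedge_mul_prod (a b : ι → A) (c : List ι → F) (l : List ι) :
    wedge (a * b) (fun u => (u.map b).prod • c u) l = (l.map b).prod • wedge a c l := by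
  induction l generalizing c with
  | nil => simp [wedge_nil]
  | cons j l ih =>
    have h1 := congrFun (wedge_smul (a * b) (b j) fun u => (u.map b).prod • c (j :: u)) l
    have h2 : (fun u : List ι => ((j :: u).map b).prod • c (j :: u)) =
        b j • fun u => (u.map b).prod • c (j :: u) := by
      funext u
      simp [mul_smul]
    rw [wedge_cons, wedge_cons, h2, h1, Pi.smul_apply, ih, List.map_cons, List.prod_cons,
      smul_sub, Pi.mul_apply, smul_smul, smul_smul, smul_smul]
    congr 2
    ring

theorem coboundary_eq_wedge_one (c : List ι → F) (l : List ι) :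
    coboundary c l = wedge (1 : ι → A) c l := by
  induction l generalizing c with
  | nil => rfl
  | cons j l ih => rw [coboundary_cons, wedge_cons, ih, Pi.one_apply, one_smul]

end cochain

section localCohomology
variable {ι R : Type} [CommRing R] (e : ι → R)

/-- Vanishing of the colimit over `N` of the degree `p` cohomology of the Koszul complexes of the
powers `e ^ N` with coefficients in `M`, that is, of the degree `p` Čech cohomology of `e`. -/
def CechExactAt (p : ℕ) (M : Type) [AddCommGroup M] [Module R M] : Prop :=
  ∀ (N : ℕ) (c : List ι → M), (∀ l : List ι, l.length = p + 1 → wedge (e ^ N) c l = 0) →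
    ∃ (k : ℕ) (b : List ι → M), ∀ l : List ι, l.length = p →
      (l.map (e ^ k)).prod • c l = wedge (e ^ (N + k)) b l

variable {e} {L M Q : Type} [AddCommGroup L] [AddCommGroup M] [AddCommGroup Q] [Module R L]
  [Module R M] [Module R Q]

theorem prod_map_pow_add (e : ι → R) (k k' : ℕ) (l : List ι) :
    (l.map (e ^ (k + k'))).prod = (l.map (e ^ k')).prod * (l.map (e ^ k)).prod := by
  rw [pow_add, mul_comm]
  exact List.prod_map_mul

theorem wedge_pow_add (N k : ℕ) (c : List ι → M) (l : List ι) :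
    wedge (e ^ (N + k)) (fun u => (u.map (e ^ k)).prod • c u) l =
      (l.map (e ^ k)).prod • wedge (e ^ N) c l := by
  rw [pow_add, wedge_mul_prod]

theorem CechExactAt.of_exact_middle {f : L →ₗ[R] M} {g : M →ₗ[R] Q} (hf : Function.Injective f)
    (hg : Function.Surjective g) (hfg : Function.Exact f g) {p : ℕ} (hL : CechExactAt e p L)
    (hQ : CechExactAt e p Q) : CechExactAt e p M := by
  classical
  intro N c hc
  obtain ⟨k, b', hb'⟩ := hQ N (fun l => g (c l)) fun l hl => by
    rw [wedge_linearMap, hc l hl, map_zero]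
  choose s hs using hg
  let b : List ι → M := fun l => s (b' l)
  have h1 : ∀ l : List ι, l.length = p →
      ∃ x, f x = (l.map (e ^ k)).prod • c l - wedge (e ^ (N + k)) b l := by
    intro l hl
    refine (hfg _).1 ?_
    rw [map_sub, map_smul, hb' l hl, ← wedge_linearMap, sub_eq_zero]
    simp only [b, hs]
  choose! a ha using h1
  obtain ⟨k', d, hd⟩ := hL (N + k) a fun l hl => hf <| by
    rw [map_zero, ← wedge_linearMap]
    have h2 : wedge (e ^ (N + k)) (fun u => f (a u)) l = wedge (e ^ (N + k))
        ((fun l => (l.map (e ^ k)).prod • c l) - wedge (e ^ (N + k)) b) l :=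
      wedge_congr_of_length (fun u hu => ha u hu) hl
    rw [h2, wedge_sub, wedge_wedge_self, Pi.sub_apply, wedge_pow_add, hc l hl]
    simp
  refine ⟨k + k', (fun l => f (d l)) + fun l => (l.map (e ^ k')).prod • b l, fun l hl => ?_⟩
  rw [wedge_add, Pi.add_apply, ← add_assoc, wedge_pow_add, wedge_linearMap, ← hd l hl, map_smul,
    ha l hl, prod_map_pow_add, smul_sub, mul_smul, sub_add_cancel]

theorem CechExactAt.of_exact_left {f : L →ₗ[R] M} {g : M →ₗ[R] Q} (hf : Function.Injective f)
    (hg : Function.Surjective g) (hfg : Function.Exact f g) {p : ℕ} (hM : CechExactAt e (p + 1) M)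
    (hQ : CechExactAt e p Q) : CechExactAt e (p + 1) L := by
  intro N c hc
  obtain ⟨k, b, hb⟩ := hM N (fun l => f (c l)) fun l hl => by
    rw [wedge_linearMap, hc l hl, map_zero]
  obtain ⟨k', q, hq⟩ := hQ (N + k) (fun l => g (b l)) fun l hl => by
    rw [wedge_linearMap, ← hb l hl, map_smul, hfg.apply_apply_eq_zero, smul_zero]
  choose s hs using hg
  have h1 : ∀ l : List ι, l.length = p →
      ∃ x, f x = (l.map (e ^ k')).prod • b l - wedge (e ^ (N + k + k')) (fun u => s (q u)) l := by
    intro l hl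
    refine (hfg _).1 ?_
    rw [map_sub, map_smul, hq l hl, ← wedge_linearMap, sub_eq_zero]
    simp only [hs]
  choose! a ha using h1
  refine ⟨k + k', a, fun l hl => hf ?_⟩
  rw [← wedge_linearMap, ← add_assoc]
  have h2 : wedge (e ^ (N + k + k')) (fun u => f (a u)) l = wedge (e ^ (N + k + k'))
      ((fun l => (l.map (e ^ k')).prod • b l) - wedge (e ^ (N + k + k')) (fun u => s (q u))) l :=
    wedge_congr_of_length (fun u hu => ha u hu) hl
  rw [h2, wedge_sub, wedge_wedge_self, sub_zero, wedge_pow_add, ← hb l hl, map_smul,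
    prod_map_pow_add, mul_smul]

theorem CechExactAt.of_bijective_smul [Fintype ι] {r : R}
    (hr : r ∈ (Ideal.span (Set.range e)).radical)
    (hM : Function.Bijective fun x : M => r • x) (p : ℕ) : CechExactAt e p M := by
  intro N c hc
  have hr' : r ∈ (Ideal.span (Set.range (e ^ N))).radical := by
    refine (Ideal.radical_le_radical_iff.2 (Ideal.span_le.2 ?_)) hr
    rintro _ ⟨j, rfl⟩
    exact ⟨N, Ideal.subset_span ⟨j, rfl⟩⟩
  obtain ⟨m, hm⟩ := hr'
  obtain ⟨a, ha⟩ := (Ideal.mem_span_range_iff_exists_fun).1 hm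
  have hbij : Function.Bijective fun x : M => r ^ m • x := by
    have := hM.iterate m
    rwa [smul_iterate] at this
  choose c' hc' using fun l => hbij.2 (c l)
  simp only at hc'
  have h0 : ∀ l : List ι, l.length = p + 1 → wedge (e ^ N) c' l = 0 := by
    intro l hl
    apply hbij.1
    simp only [smul_zero]
    rw [← hc l hl, ← Pi.smul_apply, ← wedge_smul]
    exact congrFun (congrArg _ (funext hc')) l
  refine ⟨0, ∑ j, a j • fun u => c' (j :: u), fun l hl => ?_⟩
  have h1 : wedge (e ^ N) (∑ j, a j • fun u => c' (j :: u)) =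
      ∑ j, a j • wedge (e ^ N) fun u => c' (j :: u) :=
    (map_sum (wedgeHom (F := M) (e ^ N)) _ _).trans
      (Finset.sum_congr rfl fun j _ => wedge_smul _ _ _)
  have h2 : ∀ j, wedge (e ^ N) (fun u => c' (j :: u)) l = (e ^ N) j • c' l := fun j => by
    have := h0 (j :: l) (by simp [hl])
    rw [wedge_cons, sub_eq_zero] at this
    exact this.symm
  rw [add_zero, h1, Finset.sum_apply]
  simp only [Pi.smul_apply, h2, smul_smul]
  rw [← Finset.sum_smul, ha, hc', pow_zero, List.prod_eq_one (by simp), one_smul]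

theorem CechExactAt.of_torsion [Finite ι] (hM : ∀ (j : ι) (x : M), ∃ k, e j ^ k • x = 0) {p : ℕ}
    (hp : 0 < p) : CechExactAt e p M := by
  intro N c _
  have h1 : ∀ l : List ι, l.length = p → ∃ k, ∀ k' ≥ k, (l.map (e ^ k')).prod • c l = 0 := by
    intro l hl
    cases l with
    | nil => simp at hl; omega
    | cons j l =>
      obtain ⟨k, hk⟩ := hM j (c (j :: l))
      refine ⟨k, fun k' hk' => ?_⟩
      obtain ⟨i, rfl⟩ := Nat.exists_eq_add_of_le hk'
      rw [List.map_cons, List.prod_cons, Pi.pow_apply, pow_add, mul_comm, mul_smul, mul_comm,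
        mul_smul, hk, smul_zero, smul_zero]
  choose! k hk using h1
  have hfin := List.finite_length_eq ι p
  refine ⟨hfin.toFinset.sup k, 0, fun l hl => ?_⟩
  rw [wedge_zero, Pi.zero_apply]
  exact hk l hl _ (Finset.le_sup (hfin.mem_toFinset.2 hl))

theorem exists_pow_smul_eq_zero_of_mem_radical {κ : Type} {g : κ → R} {x : M}
    (hx : ∀ u, ∃ k, g u ^ k • x = 0) {r : R} (hr : r ∈ (Ideal.span (Set.range g)).radical) :
    ∃ k, r ^ k • x = 0 := by
  have h : Ideal.span (Set.range g) ≤ (Ideal.torsionOf R M x).radical := by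
    refine Ideal.span_le.2 ?_
    rintro _ ⟨u, rfl⟩
    obtain ⟨k, hk⟩ := hx u
    exact ⟨k, (Ideal.mem_torsionOf_iff x _).2 hk⟩
  obtain ⟨k, hk⟩ := Ideal.radical_le_radical_iff.2 h hr
  exact ⟨k, (Ideal.mem_torsionOf_iff x _).1 hk⟩

theorem cechExactAt_of_length_lt [Fintype ι] {κ : Type} {g : κ → R}
    (h : (Ideal.span (Set.range g)).radical = (Ideal.span (Set.range e)).radical) (G : List κ) :
    ∀ (M : Type) [AddCommGroup M] [Module R M], (∀ u, u ∉ G → ∀ x : M, ∃ k, g u ^ k • x = 0) →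
      ∀ p, G.length < p → CechExactAt e p M := by
  induction G with
  | nil =>
    intro M _ _ hM p hp
    refine CechExactAt.of_torsion (fun j x => ?_) hp
    refine exists_pow_smul_eq_zero_of_mem_radical (fun u => hM u (by simp) x) ?_
    rw [h]
    exact Ideal.le_radical (Ideal.subset_span ⟨j, rfl⟩)
  | cons v G ih =>
    intro M _ _ hM p hp
    obtain ⟨p, rfl⟩ : ∃ q, p = q + 1 := ⟨p - 1, by omega⟩
    rw [List.length_cons] at hp
    let f := LocalizedModule.mkLinearMap (Submonoid.powers (g v)) M
    have hbij : ∀ s ∈ Submonoid.powers (g v),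
        Function.Bijective fun y : LocalizedModule (Submonoid.powers (g v)) M => s • y :=
      fun s hs => (Module.End.isUnit_iff _).1 (IsLocalizedModule.map_units f ⟨s, hs⟩)
    have hgv : g v ∈ (Ideal.span (Set.range e)).radical := by
      rw [← h]
      exact Ideal.le_radical (Ideal.subset_span ⟨v, rfl⟩)
    have hL : ∀ y : LocalizedModule (Submonoid.powers (g v)) M,
        ∃ (k : ℕ) (x : M), g v ^ k • y = f x := fun y => by
      obtain ⟨⟨x, ⟨_, k, rfl⟩⟩, hx⟩ := IsLocalizedModule.surj (Submonoid.powers (g v)) f y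
      exact ⟨k, x, hx⟩
    have hker : ∀ p, G.length < p → CechExactAt e p (LinearMap.ker f) := by
      refine ih _ fun u hu x => ?_
      by_cases huv : u = v
      · subst huv
        obtain ⟨⟨_, k, rfl⟩, hk⟩ :=
          (IsLocalizedModule.eq_zero_iff (Submonoid.powers (g u)) f).1 x.2
        exact ⟨k, Subtype.ext hk⟩
      · obtain ⟨k, hk⟩ := hM u (by simp [huv, hu]) x
        exact ⟨k, Subtype.ext hk⟩
    have hcoker : ∀ p, G.length < p → CechExactAt e p
        (LocalizedModule (Submonoid.powers (g v)) M ⧸ LinearMap.range f) := by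
      refine ih _ fun u hu y => ?_
      obtain ⟨y, rfl⟩ := Submodule.Quotient.mk_surjective _ y
      obtain ⟨k, x, hx⟩ := hL y
      by_cases huv : u = v
      · subst huv
        refine ⟨k, ?_⟩
        rw [← Submodule.Quotient.mk_smul, Submodule.Quotient.mk_eq_zero, hx]
        exact ⟨x, rfl⟩
      · obtain ⟨i, hi⟩ := hM u (by simp [huv, hu]) x
        refine ⟨i, ?_⟩
        rw [← Submodule.Quotient.mk_smul]
        suffices h0 : g u ^ i • y = 0 by rw [h0, Submodule.Quotient.mk_zero]
        apply (hbij _ ⟨k, rfl⟩).1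
        simp only [smul_zero]
        rw [smul_comm, hx, ← map_smul, hi, map_zero]
    have hrange : CechExactAt e (p + 1) (LinearMap.range f) :=
      CechExactAt.of_exact_left (Submodule.subtype_injective (LinearMap.range f))
        (Submodule.mkQ_surjective _) (LinearMap.exact_subtype_mkQ _)
        (CechExactAt.of_bijective_smul hgv (hbij _ ⟨1, by simp⟩) (p + 1)) (hcoker p (by omega))
    refine CechExactAt.of_exact_middle (Submodule.subtype_injective (LinearMap.ker f))
      f.surjective_rangeRestrict (fun x => ?_) (hker _ (by omega)) hrange
    rw [← LinearMap.mem_ker, LinearMap.ker_rangeRestrict]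
    simp

end localCohomology

section monomial
variable {ι σ K : Type} [Field K] {ε : ι → σ →₀ ℕ}

theorem lcmExponent_le_sum (ε : ι → σ →₀ ℕ) (l : List ι) : lcmExponent ε l ≤ (l.map ε).sum := by
  induction l with
  | nil => exact le_rfl
  | cons j l ih => exact sup_le le_self_add (ih.trans le_add_self)

theorem prod_map_monomial_pow (ε : ι → σ →₀ ℕ) (m : ℕ) (l : List ι) :
    (l.map ((fun j => monomial (ε j) (1 : K)) ^ m)).prod = monomial (m • (l.map ε).sum) 1 := by
  induction l with
  | nil => simp
  | cons j l ih =>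
    rw [List.map_cons, List.prod_cons, ih, Pi.pow_apply, monomial_pow, one_pow, monomial_mul,
      one_mul, List.map_cons, List.sum_cons, smul_add]

theorem exists_coboundary_eq_of_cechExactAt [Finite ι] {p : ℕ}
    (h : CechExactAt (fun j => monomial (ε j) (1 : K)) (p + 1) (MvPolynomial σ K))
    {χ : σ →₀ ℕ} {ψ : List ι → K} (hψ : ∀ l, ψ l ≠ 0 → l.length = p + 1)
    (hψ0 : coboundary ψ = 0) (hχ : ∀ l, ψ l ≠ 0 → χ ≤ lcmExponent ε l) :
    ∃ β : List ι → K, coboundary β = ψ ∧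
      ∀ l i, χ i ≠ 0 → lcmExponent ε l i = 0 → β l = 0 := by
  classical
  set e : ι → MvPolynomial σ K := fun j => monomial (ε j) (1 : K) with he
  have hψC : coboundary (fun l => (C (ψ l) : MvPolynomial σ K)) = 0 := by
    funext l
    have h2 := coboundary_map (C : K →+* MvPolynomial σ K).toAddMonoidHom ψ l
    rw [hψ0] at h2
    simpa using h2
  have hdvd : ∀ l : List ι, ∃ c : MvPolynomial σ K,
      monomial χ 1 * c = (l.map (e ^ 1)).prod * C (ψ l) := by
    intro l
    by_cases hl : ψ l = 0
    · exact ⟨0, by simp [hl]⟩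
    · rw [prod_map_monomial_pow, one_smul]
      obtain ⟨γ, hγ⟩ := exists_add_of_le ((hχ l hl).trans (lcmExponent_le_sum ε l))
      exact ⟨monomial γ (ψ l), by
        rw [monomial_mul, one_mul, ← hγ, mul_comm, C_mul_monomial, mul_one]⟩
  choose c hc using hdvd
  have hne : ∀ α : σ →₀ ℕ, monomial α (1 : K) ≠ 0 := fun α => by
    rw [Ne, monomial_eq_zero]
    exact one_ne_zero
  obtain ⟨k, b, hb⟩ := h (0 + 1) c fun l _ => by
    refine mul_left_cancel₀ (hne χ) ?_
    rw [mul_zero, ← smul_eq_mul, ← Pi.smul_apply, ← wedge_smul,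
      show (monomial χ 1 : MvPolynomial σ K) • c = fun l => (l.map (e ^ 1)).prod • C (ψ l) from
        funext hc, wedge_pow_add, pow_zero, ← coboundary_eq_wedge_one, hψC]
    simp
  set m := 0 + 1 + k with hm
  have hb' : ∀ l : List ι, l.length = p + 1 →
      (l.map (e ^ m)).prod * C (ψ l) = monomial χ 1 * wedge (e ^ m) b l := by
    intro l hl
    rw [hm, prod_map_pow_add, zero_add, mul_assoc, ← hc, ← hb l hl, smul_eq_mul]
    ring
  have hfin := List.finite_length_eq ι p
  let ω : σ →₀ ℕ := hfin.toFinset.sup fun u => m • (u.map ε).sum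
  let β : List ι → MvPolynomial σ K := fun l => monomial (ω - m • (l.map ε).sum + χ) 1 * b l
  have hβ : ∀ l : List ι, l.length = p + 1 → coboundary β l = monomial ω 1 * C (ψ l) := by
    intro l hl
    refine mul_left_cancel₀ (a := (l.map (e ^ m)).prod) ?_ ?_
    · rw [prod_map_monomial_pow]
      exact hne _
    · have h1 := wedge_pow_add (e := e) 0 m β l
      rw [zero_add, pow_zero, ← coboundary_eq_wedge_one, smul_eq_mul] at h1
      have h2 : wedge (e ^ m) (fun u => (u.map (e ^ m)).prod • β u) l =
          wedge (e ^ m) ((monomial (ω + χ) 1 : MvPolynomial σ K) • b) l :=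
        wedge_congr_of_length (fun u hu => by
          have hle : m • (u.map ε).sum ≤ ω :=
            Finset.le_sup (f := fun u : List ι => m • (u.map ε).sum) (hfin.mem_toFinset.2 hu)
          rw [prod_map_monomial_pow, smul_eq_mul, Pi.smul_apply, smul_eq_mul, ← mul_assoc,
            monomial_mul, one_mul, ← add_assoc, add_tsub_cancel_of_le hle]) hl
      rw [← h1, h2, wedge_smul, Pi.smul_apply, smul_eq_mul, mul_left_comm, hb' l hl, ← mul_assoc,
        monomial_mul, one_mul]
  let β₀ : List ι → K := fun l => if l.length = p then coeff ω (β l) else 0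
  refine ⟨β₀, ?_, ?_⟩
  · funext l
    by_cases hl : l.length = p + 1
    · have h1 : coboundary β₀ l = coboundary (fun u => lcoeff K ω (β u)) l :=
        wedge_congr_of_length (fun u hu => if_pos hu) hl
      have h2 := coboundary_map (lcoeff K ω).toAddMonoidHom β l
      rw [h1]
      refine h2.trans ?_
      rw [hβ l hl]
      change coeff ω _ = _
      rw [mul_comm, coeff_C_mul, coeff_monomial, if_pos rfl, mul_one]
    · have h1 : ψ l = 0 := by
        by_contra h
        exact hl (hψ l h)
      rw [h1]
      by_contra h
      refine hl (length_of_wedge_ne_zero (m := p) (fun l hl => ?_) h)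
      by_contra hl'
      exact hl (if_neg hl')
  · intro l i hi hl
    have h1 : (l.map ε).sum i = 0 := by
      clear * - hl
      induction l with
      | nil => rfl
      | cons j l ih =>
        rw [lcmExponent, Finsupp.sup_apply, Nat.max_eq_zero_iff] at hl
        rw [List.map_cons, List.sum_cons, Finsupp.add_apply, hl.1, ih hl.2]
    have h2 : coeff ω (β l) = 0 := by
      rw [coeff_monomial_mul', if_neg]
      intro hle
      have := hle i
      simp [h1] at this
      omega
    simp [β₀, h2]

end monomial

section cycle
variable {n : ℕ}

theorem le_card_of_radical_eq (K : Type) [Field K] (hn : 3 ≤ n) {t : ℕ}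
    {g : Fin t → MvPolynomial (ZMod n) K}
    (hg : (Ideal.span (Set.range g)).radical = (cycleIdeal K n).radical) :
    (2 * n + 1) / 3 ≤ t := by
  have : NeZero n := ⟨by omega⟩
  by_contra! ht
  obtain ⟨V, ψ, hψ, hψ0, hψV, hψβ⟩ := exists_vertexSet_cocycle K hn
  obtain ⟨p, hp⟩ : ∃ p, (2 * n + 1) / 3 = p + 1 := ⟨(2 * n + 1) / 3 - 1, by omega⟩
  rw [hp] at hψ ht
  rw [cycleIdeal_eq_span_monomial K hn] at hg
  obtain ⟨β, hβ, hβ0⟩ := exists_coboundary_eq_of_cechExactAt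
    (cechExactAt_of_length_lt hg (List.finRange t) _
      (fun u hu => absurd (List.mem_finRange u) hu) (p + 1) (by simpa using ht))
    (χ := vertexExponent V) hψ hψ0 fun l hl => vertexExponent_le_lcmExponent <| by
      by_contra h
      exact hl (hψV l h)
  refine hψβ β (fun l hl => ?_) hβ
  simp only [CoversVertices, not_forall] at hl
  obtain ⟨i, hi, hil⟩ := hl
  exact hβ0 l i (by simp [vertexExponent, hi]) (lcmExponent_edgeExponent_eq_zero hil)

end cycle

/-- For `n ≥ 3`, `ara I(Cₙ) = pd_R R/I(Cₙ)`, and the common value is `2n/3`, `(2n+1)/3`,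
`(2n-1)/3` according to `n ≡ 0, 1, 2 (mod 3)`. -/
theorem cycle_ara_eq_pd (K : Type) [Field K] (n : ℕ) (hn : 3 ≤ n) :
    araRank (cycleIdeal K n) =
        (if n % 3 = 0 then 2 * n / 3
          else if n % 3 = 1 then (2 * n + 1) / 3
          else (2 * n - 1) / 3) ∧
      projDim (MvPolynomial (ZMod n) K) (MvPolynomial (ZMod n) K ⧸ cycleIdeal K n) =
        ((araRank (cycleIdeal K n) : ℕ) : ℕ∞) := by
  have hval : (if n % 3 = 0 then 2 * n / 3 else if n % 3 = 1 then (2 * n + 1) / 3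
      else (2 * n - 1) / 3) = (2 * n + 1) / 3 := by
    split_ifs <;> omega
  have hgen := exists_cycleIdeal_radical_generators K n hn
  rw [hval] at hgen ⊢
  have hara : araRank (cycleIdeal K n) = (2 * n + 1) / 3 :=
    le_antisymm (Nat.sInf_le hgen)
      (le_csInf ⟨_, hgen⟩ fun t ⟨_, hg⟩ => le_card_of_radical_eq K hn hg)
  refine ⟨hara, ?_⟩
  rw [hara]
  refine le_antisymm (sInf_le fun i hi => ?_) (le_sInf fun d hd => ?_)
  · exact (subsingleton_derivedExt_iff_hasProjectiveDimensionLT _ _).2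
      (quotPDLE_cycleIdeal K hn) i (Nat.cast_lt.1 hi)
  · by_contra! hlt
    lift d to ℕ using hlt.ne_top
    have h := (subsingleton_derivedExt_iff_hasProjectiveDimensionLT _ d).1
      fun i hi => hd i (Nat.cast_lt.2 hi)
    exact not_hasProjectiveDimensionLT_cycleIdeal K hn
      (hasProjectiveDimensionLT_of_ge _ (d + 1) _ (Nat.cast_lt.1 hlt))
end
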